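/- arXiv:2406.14808 — 8 statements merged into one kernel-verified Lean document; each statement's English description precedes it below -/
import Mathlib

section
/- Let β > 1, let τ be an integer with 1 ≤ τ < β, let M > 0 and ε > 0, and let Ω ⊆ ℝ^m be a bounded open set. Define ᾱ = (τ ε ⌊β⌋! / (2M(β − τ)))^{1/β}. Then there exists a constant C depending only on τ and β (one may take C = (β/τ)·T_{⌊β⌋}^{(τ)}(1), where T_d is the degree-d Chebyshev polynomial) such that: for all u, ũ ∈ C^β(Ω, M) with sup_{x∈Ω} |u(x) − ũ(x)| ≤ ε, and for every multi-index k = (k_1,…,k_m) with |k| ≤ τ, one has sup_{x ∈ int_ᾱ(Ω)} |D^k u(x) − D^k ũ(x)| ≤ C · M^{τ/β} · ε^{(β−τ)/β}. -/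
/-- Partial derivative of `f` in coordinate direction `i`. -/
noncomputable def pDeriv {m : ℕ} (i : Fin m) (f : EuclideanSpace ℝ (Fin m) → ℝ) :
    EuclideanSpace ℝ (Fin m) → ℝ :=
  fun x => fderiv ℝ f x (EuclideanSpace.single i 1)

/-- Iterated partial derivative along a list of coordinate directions. -/
noncomputable def listDeriv {m : ℕ} :
    List (Fin m) → (EuclideanSpace ℝ (Fin m) → ℝ) → EuclideanSpace ℝ (Fin m) → ℝ
  | [], f => f
  | i :: l, f => listDeriv l (pDeriv i f)

/-- Multi-index partial derivative `D^k f`. -/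
noncomputable def mDeriv {m : ℕ} (k : Fin m → ℕ) (f : EuclideanSpace ℝ (Fin m) → ℝ) :
    EuclideanSpace ℝ (Fin m) → ℝ :=
  listDeriv ((List.finRange m).flatMap fun i => List.replicate (k i) i) f

/-- The multi-indices `k` on `Fin m` with `|k| ≤ fl`. -/
def mIdxLe (m fl : ℕ) : Finset (Fin m → ℕ) :=
  (Fintype.piFinset fun _ : Fin m => Finset.range (fl + 1)).filter fun k => ∑ i, k i ≤ fl

/-- The multi-indices `k` on `Fin m` with `|k| = fl`. -/
def mIdxEq (m fl : ℕ) : Finset (Fin m → ℕ) :=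
  (Fintype.piFinset fun _ : Fin m => Finset.range (fl + 1)).filter fun k => ∑ i, k i = fl

/-- `u ∈ C^β(Ω, M)`: `u` has derivatives on `Ω` up to order `fl` (the largest integer
strictly smaller than `β`) and its Hölder norm
`Σ_{|k| ≤ fl} sup_Ω |D^k u| + Σ_{|k| = fl} Hölder-seminorm(D^k u)` is at most `M`;
the norm bound is expressed via the existence of pointwise bounds summing to at most `M`. -/
def HolderBall {m : ℕ} (β : ℝ) (fl : ℕ) (Ω : Set (EuclideanSpace ℝ (Fin m))) (M : ℝ)
    (u : EuclideanSpace ℝ (Fin m) → ℝ) : Prop :=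
  ContDiffOn ℝ fl u Ω ∧
  ∃ b h : (Fin m → ℕ) → ℝ,
    (∀ k ∈ mIdxLe m fl, ∀ x ∈ Ω, |mDeriv k u x| ≤ b k) ∧
    (∀ k ∈ mIdxEq m fl, ∀ x ∈ Ω, ∀ y ∈ Ω, x ≠ y →
      |mDeriv k u x - mDeriv k u y| ≤ h k * ‖x - y‖ ^ (β - fl)) ∧
    (∑ k ∈ mIdxLe m fl, b k) + (∑ k ∈ mIdxEq m fl, h k) ≤ M


lemma canon_of_sorted {m : ℕ} (l : List (Fin m)) (hl : l.Pairwise (· ≤ ·)) :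
    (List.finRange m).flatMap (fun i => List.replicate (l.count i) i) = l := by
  apply List.Perm.eq_of_pairwise (le := (· ≤ ·)) (fun a b _ _ h1 h2 => le_antisymm h1 h2) _ hl
  · rw [List.perm_iff_count]
    intro a
    rw [List.count_flatMap]
    have : (List.count a ∘ fun i => List.replicate (List.count i l) i)
        = fun i => if i = a then List.count a l else 0 := by
      funext i
      simp only [Function.comp, List.count_replicate]
      by_cases h : i = a <;> simp [h]
    rw [this, ← List.ofFn_eq_map, List.sum_ofFn]
    simp
  · rw [List.pairwise_flatMap]
    refine ⟨fun a _ => by simp [List.pairwise_replicate], ?_⟩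
    refine (List.pairwise_le_finRange m).imp ?_
    intro a b hab x hx y hy
    rw [List.eq_of_mem_replicate hx, List.eq_of_mem_replicate hy]
    exact hab

lemma canon_sorted {m : ℕ} (k : Fin m → ℕ) :
    ((List.finRange m).flatMap (fun i => List.replicate (k i) i)).Pairwise (· ≤ ·) := by
  rw [List.pairwise_flatMap]
  refine ⟨fun a _ => by simp [List.pairwise_replicate], ?_⟩
  refine (List.pairwise_le_finRange m).imp ?_
  intro a b hab x hx y hy
  rw [List.eq_of_mem_replicate hx, List.eq_of_mem_replicate hy]
  exact hab

lemma canon_length {m : ℕ} (k : Fin m → ℕ) :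
    ((List.finRange m).flatMap (fun i => List.replicate (k i) i)).length = ∑ i, k i := by
  rw [List.length_flatMap, ← List.ofFn_eq_map, List.sum_ofFn]
  simp

lemma sum_count {m : ℕ} (l : List (Fin m)) (hl : l.Pairwise (· ≤ ·)) :
    ∑ i, l.count i = l.length := by
  rw [← canon_length, canon_of_sorted l hl]

lemma listDeriv_append {m : ℕ} (l l' : List (Fin m)) (f : EuclideanSpace ℝ (Fin m) → ℝ) :
    listDeriv (l ++ l') f = listDeriv l' (listDeriv l f) := by
  induction l generalizing f with
  | nil => rfl
  | cons i l ih => simp only [List.cons_append, listDeriv, ih]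

lemma listDeriv_contDiffOn {m : ℕ} {Ω : Set (EuclideanSpace ℝ (Fin m))} (hΩ : IsOpen Ω)
    (l : List (Fin m)) (f : EuclideanSpace ℝ (Fin m) → ℝ) (n p : ℕ) (hf : ContDiffOn ℝ n f Ω)
    (h : l.length + p ≤ n) : ContDiffOn ℝ p (listDeriv l f) Ω := by
  induction l generalizing f n with
  | nil => exact hf.of_le (by simp at h; exact_mod_cast h)
  | cons i l ih =>
    simp only [List.length_cons] at h
    obtain ⟨n, rfl⟩ : ∃ n', n = n' + 1 := ⟨n - 1, by omega⟩
    refine ih (pDeriv i f) n ?_ (by omega)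
    have := hf.fderiv_of_isOpen (m := n) hΩ (by norm_cast)
    exact this.clm_apply contDiffOn_const

lemma listDeriv_hasDerivAt {m : ℕ} {Ω : Set (EuclideanSpace ℝ (Fin m))} (hΩ : IsOpen Ω)
    (l : List (Fin m)) (i : Fin m) (f : EuclideanSpace ℝ (Fin m) → ℝ) (n : ℕ)
    (hf : ContDiffOn ℝ n f Ω) (h : l.length + 1 ≤ n) (y : EuclideanSpace ℝ (Fin m)) (t : ℝ)
    (ht : y + t • EuclideanSpace.single i (1 : ℝ) ∈ Ω) :
    HasDerivAt (fun s : ℝ => listDeriv l f (y + s • EuclideanSpace.single i (1 : ℝ)))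
      (listDeriv (l ++ [i]) f (y + t • EuclideanSpace.single i (1 : ℝ))) t := by
  have h1 := listDeriv_contDiffOn hΩ l f n 1 hf h
  have h2 : DifferentiableAt ℝ (listDeriv l f) (y + t • EuclideanSpace.single i (1 : ℝ)) :=
    (h1.contDiffAt (hΩ.mem_nhds ht)).differentiableAt (by norm_num)
  have h3 : HasDerivAt (fun s : ℝ => y + s • EuclideanSpace.single i (1 : ℝ))
      (EuclideanSpace.single i (1 : ℝ)) t := by
    simpa using ((hasDerivAt_id t).smul_const (EuclideanSpace.single i (1 : ℝ))).const_add y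
  rw [listDeriv_append]
  exact h2.hasFDerivAt.comp_hasDerivAt t h3

lemma taylor_aux (n : ℕ) : ∀ (G : ℕ → ℝ → ℝ) (ρ H : ℝ), 0 < ρ →
    (∀ j < n, ∀ t, |t| < ρ → HasDerivAt (G j) (G (j + 1) t) t) →
    (∀ t, |t| < ρ → |G n t - G n 0| ≤ H) →
    ∀ t, |t| < ρ →
      |G 0 t - ∑ j ∈ Finset.range (n + 1), G j 0 * t ^ j / (j.factorial : ℝ)| ≤ H * ρ ^ n := by
  induction n with
  | zero => intro G ρ H hρ hd hH t ht; simpa using hH t ht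
  | succ n ih =>
    intro G ρ H hρ hd hH t ht
    have ih' := ih (fun j => G (j + 1)) ρ H hρ (fun j hj s hs => hd (j + 1) (by omega) s hs) hH
    have hH0 : 0 ≤ H := (abs_nonneg _).trans (hH t ht)
    have key := Convex.norm_image_sub_le_of_norm_hasDerivWithin_le (s := {t : ℝ | |t| < ρ})
      (f := fun t => G 0 t - ∑ j ∈ Finset.range (n + 1 + 1), G j 0 * t ^ j / (j.factorial : ℝ))
      (f' := fun t => G 1 t -
        ∑ j ∈ Finset.range (n + 1), G (j + 1) 0 * t ^ j / (j.factorial : ℝ))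
      (C := H * ρ ^ n) (x := 0) (y := t) ?_ ?_ ?_ ?_ ht
    · simp only [Finset.sum_range_succ' _ (n + 1)] at key
      simp at key
      have e : |G 0 t - ∑ j ∈ Finset.range (n + 1 + 1), G j 0 * t ^ j / (j.factorial : ℝ)|
          ≤ H * ρ ^ n * |t| := by
        rw [Finset.sum_range_succ']
        simpa using key
      refine e.trans ?_
      rw [pow_succ, ← mul_assoc]
      exact mul_le_mul_of_nonneg_left ht.le (by positivity)
    · intro s hs
      apply HasDerivAt.hasDerivWithinAt
      refine (hd 0 (by omega) s hs).sub ?_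
      simp only [Finset.sum_range_succ' _ (n + 1)]
      have : HasDerivAt (fun t : ℝ => ∑ j ∈ Finset.range (n + 1),
          G (j + 1) 0 * t ^ (j + 1) / ((j + 1).factorial : ℝ))
          (∑ j ∈ Finset.range (n + 1), G (j + 1) 0 * s ^ j / (j.factorial : ℝ)) s := by
        apply HasDerivAt.fun_sum
        intro j _
        have h1 := ((hasDerivAt_pow (j + 1) s).const_mul (G (j + 1) 0)).div_const
          ((j + 1).factorial : ℝ)
        refine h1.congr_deriv ?_
        rw [Nat.factorial_succ]
        have : (j.factorial : ℝ) ≠ 0 := by positivity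
        have : ((j : ℝ) + 1) ≠ 0 := by positivity
        push_cast
        field_simp
      simpa using this
    · intro s hs
      exact ih' s hs
    · have : {t : ℝ | |t| < ρ} = Metric.ball (0 : ℝ) ρ := by
        ext; simp
      rw [this]; exact convex_ball _ _
    · simpa using hρ

lemma fd_coeff (n : ℕ) : ∃ (c t : ℕ → ℝ), (∀ i ∈ Finset.range (n + 1), |t i| < 1) ∧
    ∀ j ≤ n, ∑ i ∈ Finset.range (n + 1), c i * t i ^ j = if j = 1 then 1 else 0 := by
  classical
  set t : ℕ → ℝ := fun i => (i : ℝ) / (n + 1)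
  have hpos : (0 : ℝ) < n + 1 := by positivity
  have hinj : Set.InjOn t (Finset.range (n + 1) : Set ℕ) := by
    intro a _ b _ h
    simp only [t] at h
    rw [div_left_inj' hpos.ne'] at h
    exact_mod_cast h
  refine ⟨fun i => (Polynomial.derivative (Lagrange.basis (Finset.range (n + 1)) t i)).eval 0, t,
    ?_, ?_⟩
  · intro i hi
    simp only [t]
    rw [abs_of_nonneg (by positivity), div_lt_one hpos]
    rw [Finset.mem_range] at hi
    exact_mod_cast hi
  · intro j hj
    have h := Lagrange.eq_interpolate (f := (Polynomial.X ^ j : Polynomial ℝ)) hinj (by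
      rw [Polynomial.degree_X_pow, Finset.card_range]; exact_mod_cast Nat.lt_succ_of_le hj)
    have h2 := congrArg (fun p => (Polynomial.derivative p).eval 0) h
    simp only [Lagrange.interpolate_apply, Polynomial.derivative_sum, Polynomial.eval_finsetSum]
      at h2
    rw [Finset.sum_congr rfl (g := fun i => _)]
    · rw [← h2]
      rcases j with _ | _ | j <;> simp
    · intro i _
      rw [Polynomial.derivative_C_mul, Polynomial.eval_C_mul]
      simp only [Polynomial.eval_pow, Polynomial.eval_X]
      ring

lemma interp1 (n : ℕ) (hn : 1 ≤ n) : ∃ K : ℝ, 0 < K ∧ ∀ (G : ℕ → ℝ → ℝ) (ρ H E : ℝ), 0 < ρ →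
    (∀ j < n, ∀ t, |t| < ρ → HasDerivAt (G j) (G (j + 1) t) t) →
    (∀ t, |t| < ρ → |G n t - G n 0| ≤ H) → (∀ t, |t| < ρ → |G 0 t| ≤ E) →
    |G 1 0| ≤ K * (E / ρ + H * ρ ^ n / ρ) := by
  obtain ⟨c, t, ht, hc⟩ := fd_coeff n
  refine ⟨∑ i ∈ Finset.range (n + 1), |c i| + 1, by positivity, ?_⟩
  intro G ρ H E hρ hd hH hE
  have h0 : |(0 : ℝ)| < ρ := by simpa using hρ
  have hE0 : 0 ≤ E := (abs_nonneg _).trans (hE 0 h0)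
  have hH0 : 0 ≤ H := (abs_nonneg _).trans (hH 0 h0)
  have htay := taylor_aux n G ρ H hρ hd hH
  have e1 : ∑ i ∈ Finset.range (n + 1), c i *
      (∑ j ∈ Finset.range (n + 1), G j 0 * (ρ * t i) ^ j / (j.factorial : ℝ)) = ρ * G 1 0 := by
    simp only [Finset.mul_sum]
    rw [Finset.sum_comm]
    have : ∀ j ∈ Finset.range (n + 1), ∑ i ∈ Finset.range (n + 1),
        c i * (G j 0 * (ρ * t i) ^ j / (j.factorial : ℝ)) = if j = 1 then ρ * G 1 0 else 0 := by
      intro j hj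
      have h1 := hc j (by rw [Finset.mem_range] at hj; omega)
      calc _ = (G j 0 * ρ ^ j / (j.factorial : ℝ)) *
            ∑ i ∈ Finset.range (n + 1), c i * t i ^ j := by
            rw [Finset.mul_sum]
            refine Finset.sum_congr rfl fun i _ => ?_
            rw [mul_pow]; ring
        _ = _ := by
            rw [h1]
            split_ifs with h
            · subst h; simp; ring
            · simp
    rw [Finset.sum_congr rfl this, Finset.sum_ite_eq']
    simp; omega
  have e2 : |ρ * G 1 0| ≤ ∑ i ∈ Finset.range (n + 1), |c i| * (E + H * ρ ^ n) := by
    rw [← e1]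
    refine (Finset.abs_sum_le_sum_abs _ _).trans (Finset.sum_le_sum fun i hi => ?_)
    rw [abs_mul]
    refine mul_le_mul_of_nonneg_left ?_ (abs_nonneg _)
    have hti : |ρ * t i| < ρ := by
      rw [abs_mul, abs_of_pos hρ]
      have := ht i hi
      nlinarith
    have a1 := abs_le.1 (htay _ hti)
    have a2 := abs_le.1 (hE _ hti)
    rw [abs_le]
    constructor <;> linarith
  rw [← Finset.sum_mul, abs_mul, abs_of_pos hρ] at e2
  rw [← add_div, ← mul_div_assoc, le_div_iff₀ hρ, mul_comm]
  refine e2.trans (mul_le_mul_of_nonneg_right (by linarith) (by positivity))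

lemma holder_bounds {m : ℕ} {β : ℝ} {fl : ℕ} (hfl0 : 1 ≤ fl) (hfl1 : (fl : ℝ) < β)
    {Ω : Set (EuclideanSpace ℝ (Fin m))} (hΩ : IsOpen Ω) {M : ℝ}
    {u : EuclideanSpace ℝ (Fin m) → ℝ} (hu : HolderBall β fl Ω M u) :
    (∀ l : List (Fin m), l.Pairwise (· ≤ ·) → l.length ≤ fl → ∀ x ∈ Ω, |listDeriv l u x| ≤ M) ∧
    (∀ l : List (Fin m), l.Pairwise (· ≤ ·) → l.length = fl → ∀ x ∈ Ω, ∀ y ∈ Ω,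
      |listDeriv l u x - listDeriv l u y| ≤ M * ‖x - y‖ ^ (β - fl)) := by
  obtain ⟨-, b, h, hb, hh, hM⟩ := hu
  rcases Ω.eq_empty_or_nonempty with rfl | ⟨z, hz⟩
  · simp
  have b0 : ∀ k ∈ mIdxLe m fl, 0 ≤ b k := fun k hk => (abs_nonneg _).trans (hb k hk z hz)
  have h0 : ∀ k ∈ mIdxEq m fl, 0 ≤ h k := by
    intro k hk
    have hsum : ∑ i, k i = fl := (Finset.mem_filter.1 hk).2
    obtain ⟨i, -, -⟩ : ∃ i ∈ (Finset.univ : Finset (Fin m)), k i ≠ 0 := by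
      apply Finset.exists_ne_zero_of_sum_ne_zero
      omega
    obtain ⟨r, hr, hball⟩ := Metric.isOpen_iff.1 hΩ z hz
    set y := z + (r / 2) • EuclideanSpace.single i (1 : ℝ) with hy
    have hn : ‖z - y‖ = r / 2 := by
      rw [hy, sub_add_cancel_left, norm_neg, norm_smul]
      simp [abs_of_pos hr]
    have hyΩ : y ∈ Ω := hball (by rw [Metric.mem_ball, dist_comm, dist_eq_norm, hn]; linarith)
    have hne : z ≠ y := by
      intro e
      rw [← e] at hn
      simp at hn
      linarith
    have := (abs_nonneg _).trans (hh k hk z hz y hyΩ hne)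
    have hp : 0 < ‖z - y‖ ^ (β - fl) := Real.rpow_pos_of_pos (by rw [hn]; linarith) _
    exact nonneg_of_mul_nonneg_left this hp
  have sb := Finset.sum_nonneg b0
  have sh := Finset.sum_nonneg h0
  have mem : ∀ l : List (Fin m), l.Pairwise (· ≤ ·) → l.length ≤ fl →
      (fun i => l.count i) ∈ Fintype.piFinset fun _ : Fin m => Finset.range (fl + 1) := by
    intro l hl hlen
    rw [Fintype.mem_piFinset]
    intro i
    have := List.count_le_length (a := i) (l := l)
    rw [Finset.mem_range]; omega
  constructor
  · intro l hl hlen x hx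
    have hk : (fun i => l.count i) ∈ mIdxLe m fl :=
      Finset.mem_filter.2 ⟨mem l hl hlen, by rw [sum_count l hl]; exact hlen⟩
    have h1 := hb _ hk x hx
    have h2 := Finset.single_le_sum b0 hk
    unfold mDeriv at h1
    rw [canon_of_sorted l hl] at h1
    linarith
  · intro l hl hlen x hx y hy
    have hk : (fun i => l.count i) ∈ mIdxEq m fl :=
      Finset.mem_filter.2 ⟨mem l hl hlen.le, by rw [sum_count l hl]; exact hlen⟩
    have h2 := Finset.single_le_sum h0 hk
    by_cases hxy : x = y
    · subst hxy
      simp only [sub_self, abs_zero, norm_zero]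
      exact mul_nonneg (by linarith) (Real.rpow_nonneg le_rfl _)
    have h1 := hh _ hk x hx y hy hxy
    unfold mDeriv at h1
    rw [canon_of_sorted l hl] at h1
    refine h1.trans (mul_le_mul_of_nonneg_right (by linarith) (by positivity))

lemma interp (β c : ℝ) (τ fl : ℕ) (hc : 0 < c) (hτ : τ ≤ fl) (hfl1 : (fl : ℝ) < β) (j : ℕ) :
    j ≤ τ → ∃ C : ℝ, 0 < C ∧
    ∀ (m : ℕ) (Ω : Set (EuclideanSpace ℝ (Fin m))), IsOpen Ω → ∀ M δ : ℝ, 0 < M → 0 < δ →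
    ∀ u v : EuclideanSpace ℝ (Fin m) → ℝ, ContDiffOn ℝ fl u Ω → ContDiffOn ℝ fl v Ω →
    (∀ l : List (Fin m), l.Pairwise (· ≤ ·) → l.length = fl → ∀ x ∈ Ω, ∀ y ∈ Ω,
      |listDeriv l u x - listDeriv l u y| ≤ M * ‖x - y‖ ^ (β - fl)) →
    (∀ l : List (Fin m), l.Pairwise (· ≤ ·) → l.length = fl → ∀ x ∈ Ω, ∀ y ∈ Ω,
      |listDeriv l v x - listDeriv l v y| ≤ M * ‖x - y‖ ^ (β - fl)) →
    (∀ x ∈ Ω, |u x - v x| ≤ M * δ ^ β) →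
    ∀ x, Metric.ball x (c * δ) ⊆ Ω →
    ∀ l : List (Fin m), l.Pairwise (· ≤ ·) → l.length = j →
    ∀ y ∈ Metric.ball x (c * δ - j * (c / (τ + 1) * δ)),
      |listDeriv l u y - listDeriv l v y| ≤ C * (M * δ ^ (β - j)) := by
  induction j with
  | zero =>
    intro _
    refine ⟨1, one_pos, ?_⟩
    intro m Ω hΩ M δ hM hδ u v hu hv Hu Hv huv x hx l hl hlen y hy
    rw [List.length_eq_zero_iff] at hlen
    subst hlen
    simp only [Nat.cast_zero, zero_mul, sub_zero] at hy ⊢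
    simpa [listDeriv] using huv y (hx hy)
  | succ j ih =>
    intro hj
    obtain ⟨C, hC, ih⟩ := ih (by omega)
    obtain ⟨K, hK, hint⟩ := interp1 (fl - j) (by omega)
    set c1 : ℝ := c / (τ + 1) with hc1
    have hc1p : 0 < c1 := by positivity
    refine ⟨K * (C / c1 + 2 * c1 ^ (β - j - 1)), by positivity, ?_⟩
    intro m Ω hΩ M δ hM hδ u v hu hv Hu Hv huv x hx l hl hlen y hy
    obtain ⟨l', i, rfl⟩ : ∃ l' i, l = l' ++ [i] := by
      rcases List.eq_nil_or_concat l with rfl | ⟨l', i, h⟩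
      · simp at hlen
      · exact ⟨l', i, by simpa using h⟩
    have hlen' : l'.length = j := by simpa using hlen
    rw [List.pairwise_append] at hl
    obtain ⟨hl', -, hli⟩ := hl
    have hsort : ∀ q, (l' ++ List.replicate q i).Pairwise (· ≤ ·) := by
      intro q
      rw [List.pairwise_append]
      refine ⟨hl', by simp [List.pairwise_replicate], ?_⟩
      intro a ha b hb
      rw [List.eq_of_mem_replicate hb]
      exact hli a ha i (by simp)
    set ρ := c1 * δ with hρ
    have hρp : 0 < ρ := by positivity
    have hmem : ∀ t : ℝ, |t| < ρ →
        y + t • EuclideanSpace.single i (1 : ℝ) ∈ Metric.ball x (c * δ - j * ρ) := by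
      intro t ht
      rw [Metric.mem_ball] at hy ⊢
      have h1 : dist (y + t • EuclideanSpace.single i (1 : ℝ)) y = |t| := by
        rw [dist_eq_norm, add_sub_cancel_left, norm_smul]; simp
      have := dist_triangle (y + t • EuclideanSpace.single i (1 : ℝ)) y x
      push_cast at hy
      linarith
    have hmemΩ : ∀ t : ℝ, |t| < ρ → y + t • EuclideanSpace.single i (1 : ℝ) ∈ Ω := by
      intro t ht
      refine hx (Metric.ball_subset_ball ?_ (hmem t ht))
      have : 0 ≤ (j : ℝ) * ρ := by positivity
      linarith
    have hstep : ∀ q, l' ++ List.replicate (q + 1) i = (l' ++ List.replicate q i) ++ [i] := by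
      intro q
      rw [List.replicate_succ', List.append_assoc]
    have hfin := hint (fun q t =>
      listDeriv (l' ++ List.replicate q i) u (y + t • EuclideanSpace.single i (1 : ℝ)) -
      listDeriv (l' ++ List.replicate q i) v (y + t • EuclideanSpace.single i (1 : ℝ)))
      ρ (2 * M * ρ ^ (β - fl)) (C * (M * δ ^ (β - j))) hρp ?_ ?_ ?_
    · simp only [zero_smul, add_zero, List.replicate_one] at hfin
      refine hfin.trans (le_of_eq ?_)
      have e1 : δ ^ (β - j) = δ ^ (β - (j + 1 : ℕ)) * δ := by
        rw [← Real.rpow_add_one hδ.ne']; congr 1; push_cast; ring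
      have e2 : ρ ^ (β - fl) * ρ ^ (fl - j) = ρ ^ (β - j - 1) * ρ := by
        rw [← Real.rpow_add_one hρp.ne', ← Real.rpow_natCast, ← Real.rpow_add hρp,
          Nat.cast_sub (by omega)]
        congr 1; ring
      have e3 : ρ ^ (β - j - 1) = c1 ^ (β - j - 1) * δ ^ (β - (j + 1 : ℕ)) := by
        rw [hρ, Real.mul_rpow hc1p.le hδ.le]
        congr 2; push_cast; ring
      rw [mul_assoc (2 * M), e2, e3, e1, hρ]
      field_simp
    · intro q hq t ht
      simp only [hstep]
      exact (listDeriv_hasDerivAt hΩ _ i u fl hu (by simp; omega) y t (hmemΩ t ht)).sub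
        (listDeriv_hasDerivAt hΩ _ i v fl hv (by simp; omega) y t (hmemΩ t ht))
    · intro t ht
      have h0 : |(0 : ℝ)| < ρ := by simpa using hρp
      have hL : (l' ++ List.replicate (fl - j) i).length = fl := by simp; omega
      have a1 := abs_le.1 (Hu _ (hsort _) hL _ (hmemΩ t ht) _ (hmemΩ 0 h0))
      have a2 := abs_le.1 (Hv _ (hsort _) hL _ (hmemΩ t ht) _ (hmemΩ 0 h0))
      have hn : ‖y + t • EuclideanSpace.single i (1 : ℝ) -
          (y + (0 : ℝ) • EuclideanSpace.single i (1 : ℝ))‖ = |t| := by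
        rw [zero_smul, add_zero, add_sub_cancel_left, norm_smul]; simp
      rw [hn] at a1 a2
      have hr : M * |t| ^ (β - fl) ≤ M * ρ ^ (β - fl) :=
        mul_le_mul_of_nonneg_left
          (Real.rpow_le_rpow (abs_nonneg _) ht.le (by linarith)) hM.le
      rw [abs_le]
      constructor <;> linarith
    · intro t ht
      simpa using ih m Ω hΩ M δ hM hδ u v hu hv Hu Hv huv x hx l' hl' hlen' _ (hmem t ht)

/-- If `u, ũ ∈ C^β(Ω, M)` are uniformly `ε`-close on `Ω`, then for every multi-index
`|k| ≤ τ < β` and every `x ∈ int_ᾱ(Ω)` with `ᾱ = (τ ε ⌊β⌋!/(2M(β−τ)))^{1/β}`,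
`|D^k u(x) − D^k ũ(x)| ≤ C M^{τ/β} ε^{(β−τ)/β}`, with `C` depending only on `τ` and `β`. -/
theorem stmt_0 (β : ℝ) (hβ : 1 < β) (τ fl : ℕ) (hτ1 : 1 ≤ τ) (hτβ : (τ : ℝ) < β)
    (hfl1 : (fl : ℝ) < β) (hfl2 : β ≤ fl + 1) :
    ∃ C : ℝ, 0 < C ∧
      ∀ (m : ℕ) (Ω : Set (EuclideanSpace ℝ (Fin m))), IsOpen Ω → Bornology.IsBounded Ω →
      ∀ M ε : ℝ, 0 < M → 0 < ε →
      ∀ u v : EuclideanSpace ℝ (Fin m) → ℝ,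
        HolderBall β fl Ω M u → HolderBall β fl Ω M v →
        (∀ x ∈ Ω, |u x - v x| ≤ ε) →
        ∀ k : Fin m → ℕ, (∑ i, k i) ≤ τ →
        ∀ x ∈ Ω,
          Metric.ball x ((τ * ε * (Nat.factorial fl) / (2 * M * (β - τ))) ^ (1 / β)) ⊆ Ω →
          |mDeriv k u x - mDeriv k v x| ≤ C * M ^ ((τ : ℝ) / β) * ε ^ ((β - τ) / β) := by
  have hfl0 : 1 ≤ fl := by
    have : (0 : ℝ) < fl := by linarith
    exact_mod_cast this
  have hτfl : τ ≤ fl := by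
    have : (τ : ℝ) < fl + 1 := by linarith
    exact Nat.lt_succ_iff.1 (by exact_mod_cast this)
  have hβ0 : 0 < β := by linarith
  have hτ0 : (0 : ℝ) < τ := by exact_mod_cast hτ1
  have hβτ : 0 < β - τ := by linarith
  have hfac : (0 : ℝ) < (Nat.factorial fl : ℝ) := by positivity
  set c : ℝ := (τ * (Nat.factorial fl) / (2 * (β - τ))) ^ (1 / β) with hc
  have hcp : 0 < c := by positivity
  have hI := interp β c τ fl hcp hτfl hfl1
  choose! C hC hI using hI
  have hSn : 0 ≤ ∑ j ∈ Finset.range (τ + 1), C j :=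
    Finset.sum_nonneg fun j hj => (hC j (by rw [Finset.mem_range] at hj; omega)).le
  refine ⟨2 + ∑ j ∈ Finset.range (τ + 1), C j, by positivity, ?_⟩
  intro m Ω hΩ _ M ε hM hε u v hu hv huv k hk x hx hball
  obtain ⟨bu, Hu⟩ := holder_bounds hfl0 hfl1 hΩ hu
  obtain ⟨bv, Hv⟩ := holder_bounds hfl0 hfl1 hΩ hv
  set δ : ℝ := (ε / M) ^ (1 / β) with hδ
  have hδp : 0 < δ := by positivity
  have hrad : (τ * ε * (Nat.factorial fl) / (2 * M * (β - τ))) ^ (1 / β) = c * δ := by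
    rw [hc, hδ, ← Real.mul_rpow (by positivity) (by positivity)]
    congr 1
    field_simp
  rw [hrad] at hball
  have hpow : ∀ p : ℝ, δ ^ p = (ε / M) ^ (p / β) := by
    intro p
    rw [hδ, ← Real.rpow_mul (by positivity)]
    congr 1; ring
  have hRHS : M ^ ((τ : ℝ) / β) * ε ^ ((β - τ) / β) = M * δ ^ (β - τ) := by
    rw [hpow, Real.div_rpow hε.le hM.le]
    have : M = M ^ ((τ : ℝ) / β) * M ^ ((β - τ) / β) := by
      rw [← Real.rpow_add hM, ← add_div, add_sub_cancel, div_self hβ0.ne', Real.rpow_one]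
    have h2 : M ^ ((β - τ) / β) ≠ 0 := by positivity
    conv_rhs => rw [mul_div_assoc', mul_comm, mul_div_assoc]
    rw [mul_comm]
    congr 1
    rw [eq_div_iff h2, ← this]
  rw [mul_assoc, hRHS]
  have hMd : 0 < M * δ ^ (β - τ) := by positivity
  unfold mDeriv
  set L := (List.finRange m).flatMap fun i => List.replicate (k i) i with hL
  have hLs : L.Pairwise (· ≤ ·) := canon_sorted k
  have hLl : L.length = ∑ i, k i := canon_length k
  rcases le_total 1 δ with h1 | h1
  · have a1 := abs_le.1 (bu L hLs (by omega) x hx)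
    have a2 := abs_le.1 (bv L hLs (by omega) x hx)
    have h2 : 1 ≤ δ ^ (β - τ) := Real.one_le_rpow h1 hβτ.le
    have h3 : M ≤ M * δ ^ (β - τ) := by nlinarith
    have h4 : |listDeriv L u x - listDeriv L v x| ≤ 2 * (M * δ ^ (β - τ)) := by
      rw [abs_le]; constructor <;> linarith
    nlinarith
  · have hεM : ∀ x ∈ Ω, |u x - v x| ≤ M * δ ^ β := by
      intro x hx
      rw [hpow, div_self hβ0.ne', Real.rpow_one, mul_div_cancel₀ _ hM.ne']
      exact huv x hx
    have hjτ : ((∑ i, k i : ℕ) : ℝ) ≤ τ := by exact_mod_cast hk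
    have h2 := hI _ hk m Ω hΩ M δ hM hδp u v hu.1 hv.1 Hu Hv hεM x hball L hLs hLl x (by
      apply Metric.mem_ball_self
      have h5 : ((∑ i, k i : ℕ) : ℝ) * (c / (τ + 1) * δ) ≤ τ * (c / (τ + 1) * δ) :=
        mul_le_mul_of_nonneg_right hjτ (by positivity)
      have h6 : (τ : ℝ) * (c / (τ + 1) * δ) = c * δ - c / (τ + 1) * δ := by
        field_simp; ring
      have h7 : 0 < c / (τ + 1) * δ := by positivity
      linarith)
    refine h2.trans ?_
    have h3 : C (∑ i, k i) ≤ ∑ j ∈ Finset.range (τ + 1), C j :=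
      Finset.single_le_sum (f := C)
        (fun j hj => (hC j (by rw [Finset.mem_range] at hj; omega)).le)
        (by rw [Finset.mem_range]; omega)
    have h4 : δ ^ (β - (∑ i, k i : ℕ)) ≤ δ ^ (β - τ) :=
      Real.rpow_le_rpow_of_exponent_ge hδp h1 (by linarith)
    refine mul_le_mul (by linarith) (mul_le_mul_of_nonneg_left h4 hM.le) (by positivity)
      (by positivity)
end

section
/- Let Ω ⊆ ℝ^m be a bounded open set equipped with a Borel probability measure ν, let Θ ⊆ ℝ^d be compact, and let Γ : Θ → (bounded continuous functions on Ω) satisfy sup_{x∈Ω} |Γ(θ₁)(x) − Γ(θ₂)(x)| ≤ L ‖θ₁ − θ₂‖₂ for all θ₁, θ₂ ∈ Θ. Fix θ⋆ ∈ Θ, set u⋆ = Γ(θ⋆), and fix σ > 0. For each n, let (s₁, Y₁),…,(s_n, Y_n) be i.i.d. with s_i ∼ ν and Y_i = u⋆(s_i) + σ ξ_i, where ξ₁,…,ξ_n are i.i.d. standard Gaussian random variables independent of (s₁,…,s_n). Then for every η > 0 there exist K > 0 and N such that for all n ≥ N and for every random element û_n of Γ(Θ) satisfying Σ_{i=1}^n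 (Y_i − û_n(s_i))² = min_{u ∈ Γ(Θ)} Σ_{i=1}^n (Y_i − u(s_i))², one has P( ∫_Ω (û_n(x) − u⋆(x))² ν(dx) > K (d/n) log(n/d) ) ≤ η. -/
open MeasureTheory ProbabilityTheory

lemma net_exists {d : ℕ} (hd : 0 < d) (Θ : Set (EuclideanSpace ℝ (Fin d))) (R : ℕ)
    (hR : ∀ θ ∈ Θ, ‖θ‖ ≤ R) (n : ℕ) (hn : 0 < n) :
    ∃ T : Finset (EuclideanSpace ℝ (Fin d)), (∀ θ ∈ T, θ ∈ Θ) ∧ T.card ≤ ((2 * R + 1) * n) ^ d ∧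
      ∀ θ ∈ Θ, ∃ θ' ∈ T, ‖θ - θ'‖ ≤ d / n := by
  classical
  have hn' : (0:ℝ) < n := by exact_mod_cast hn
  let F : EuclideanSpace ℝ (Fin d) → (Fin d → ℤ) := fun θ j => ⌊(n:ℝ) * θ j⌋
  let S : Finset (Fin d → ℤ) := Fintype.piFinset (fun _ => Finset.Icc (-((R * n : ℕ) : ℤ)) ((R * n : ℕ) : ℤ))
  have hFS : ∀ θ ∈ Θ, F θ ∈ S := by
    intro θ hθ
    simp only [S, Fintype.mem_piFinset, Finset.mem_Icc]
    intro j
    have h1 : |θ j| ≤ R := by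
      have := PiLp.norm_apply_le θ j
      rw [Real.norm_eq_abs] at this
      exact this.trans (hR θ hθ)
    have h2 := abs_le.1 h1
    constructor
    · apply Int.le_floor.2
      push_cast
      nlinarith
    · have : (⌊(n:ℝ) * θ j⌋ : ℝ) ≤ ((R * n : ℕ) : ℤ) := by
        refine (Int.floor_le _).trans ?_
        push_cast
        nlinarith
      exact_mod_cast this
  let S' := S.filter (fun v => ∃ θ ∈ Θ, F θ = v)
  have hS' : ∀ v : S', ∃ θ ∈ Θ, F θ = v.1 := fun v => (Finset.mem_filter.1 v.2).2
  choose G hG1 hG2 using hS'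
  refine ⟨Finset.univ.image G, ?_, ?_, ?_⟩
  · intro θ hθ
    obtain ⟨v, -, rfl⟩ := Finset.mem_image.1 hθ
    exact hG1 v
  · refine Finset.card_image_le.trans ?_
    rw [Finset.card_univ, Fintype.card_coe]
    refine (Finset.card_filter_le _ _).trans ?_
    simp only [S, Fintype.card_piFinset, Int.card_Icc, Finset.prod_const, Finset.card_univ, Fintype.card_fin]
    apply Nat.pow_le_pow_left
    have : (((R * n : ℕ) : ℤ) + 1 - -((R * n : ℕ) : ℤ)).toNat = 2 * (R * n) + 1 := by omega
    rw [this]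
    nlinarith
  · intro θ hθ
    have hv : F θ ∈ S' := Finset.mem_filter.2 ⟨hFS θ hθ, θ, hθ, rfl⟩
    refine ⟨G ⟨F θ, hv⟩, Finset.mem_image_of_mem _ (Finset.mem_univ _), ?_⟩
    have h2 := hG2 ⟨F θ, hv⟩
    set θ' := G ⟨F θ, hv⟩
    have hc : ∀ j, |(θ - θ') j| ≤ 1 / n := by
      intro j
      have h3 : ⌊(n:ℝ) * θ' j⌋ = ⌊(n:ℝ) * θ j⌋ := congrFun h2 j
      have h4 := Int.abs_sub_lt_one_of_floor_eq_floor h3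
      rw [← mul_sub, abs_mul, abs_of_pos hn', abs_sub_comm] at h4
      rw [PiLp.sub_apply, le_div_iff₀ hn', mul_comm]
      exact h4.le
    rw [EuclideanSpace.norm_eq]
    apply Real.sqrt_le_iff.2
    constructor
    · positivity
    · calc ∑ i, ‖(θ - θ') i‖ ^ 2 ≤ ∑ i : Fin d, (1 / (n:ℝ)) ^ 2 := by
            apply Finset.sum_le_sum
            intro i _
            exact pow_le_pow_left₀ (norm_nonneg _) (hc i) 2
        _ = d * (1 / (n:ℝ)) ^ 2 := by simp
        _ ≤ (d / n) ^ 2 := by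
            have : (1:ℝ) ≤ d := by exact_mod_cast hd
            rw [div_pow, div_pow, one_pow, mul_one_div]
            gcongr
            nlinarith

lemma gauss_exp (a b : ℝ) :
    ∫⁻ y, ENNReal.ofReal (Real.exp (a + b * y)) ∂(gaussianReal 0 1)
      = ENNReal.ofReal (Real.exp (a + b ^ 2 / 2)) := by
  have h := mgf_gaussianReal (p := gaussianReal 0 1) (X := id) (μ := 0) (v := 1) (by simp) b
  have hi := integrable_exp_mul_gaussianReal (μ := 0) (v := 1) b
  simp only [mgf, id] at h
  simp only [Real.exp_add]
  rw [← ofReal_integral_eq_lintegral_ofReal (hi.const_mul _)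
    (Filter.Eventually.of_forall fun _ => by positivity), integral_const_mul, h]
  simp

lemma exp_bound {x b : ℝ} (hx : 0 ≤ x) (hb : x ≤ b) : Real.exp (-x) ≤ 1 - x / (1 + b) := by
  have h1 : Real.exp (-x) ≤ 1 / (1 + x) := by
    rw [Real.exp_neg, ← one_div]
    apply one_div_le_one_div_of_le (by linarith)
    linarith [Real.add_one_le_exp x]
  have h2 : 1 / (1 + x) = 1 - x / (1 + x) := by field_simp; ring
  have h3 : x / (1 + b) ≤ x / (1 + x) := by gcongr
  linarith

lemma single_mgf {E : Type*} [MeasurableSpace E] (ν : Measure E) [IsProbabilityMeasure ν]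
    (g : E → ℝ) (hg : Measurable g) (B : ℝ) (hB : ∀ x, |g x| ≤ B) (σ l c : ℝ) (hl : 0 < l)
    (hσl : 4 * σ ^ 2 * l = 1) (hc : c = l / 2 / (1 + l / 2 * B ^ 2)) :
    ∫⁻ p, ENNReal.ofReal (Real.exp (-l * (g p.1 ^ 2 - 2 * σ * p.2 * g p.1))) ∂(ν.prod (gaussianReal 0 1))
      ≤ ENNReal.ofReal (Real.exp (- c * ∫ x, g x ^ 2 ∂ν)) := by
  have hB2 : ∀ x, g x ^ 2 ≤ B ^ 2 := fun x => by
    rw [← sq_abs]; exact pow_le_pow_left₀ (abs_nonneg _) (hB x) 2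
  have hint : Integrable (fun x => g x ^ 2) ν := by
    apply Integrable.of_bound (hg.pow_const 2).aestronglyMeasurable (B ^ 2)
    filter_upwards with x
    rw [Real.norm_eq_abs, abs_of_nonneg (sq_nonneg _)]; exact hB2 x
  rw [lintegral_prod _ (by fun_prop)]
  have h1 : ∀ x, ∫⁻ y, ENNReal.ofReal (Real.exp (-l * (g x ^ 2 - 2 * σ * y * g x))) ∂(gaussianReal 0 1)
      ≤ ENNReal.ofReal (1 - c * g x ^ 2) := by
    intro x
    have := gauss_exp (-l * g x ^ 2) (2 * σ * l * g x)
    have e : ∀ y, -l * (g x ^ 2 - 2 * σ * y * g x) = -l * g x ^ 2 + 2 * σ * l * g x * y := by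
      intro y; ring
    simp only [e]
    rw [this]
    apply ENNReal.ofReal_le_ofReal
    have e2 : -l * g x ^ 2 + (2 * σ * l * g x) ^ 2 / 2 = -(l / 2 * g x ^ 2) := by
      linear_combination (l * g x ^ 2 / 2) * hσl
    rw [e2]
    refine (exp_bound (b := l / 2 * B ^ 2) (by positivity) ?_).trans (le_of_eq ?_)
    · have := hB2 x
      gcongr
    · rw [hc]; ring
  refine (lintegral_mono h1).trans ?_
  have hcB : ∀ x, 0 ≤ 1 - c * g x ^ 2 := by
    intro x
    have h2 := hB2 x
    have : c * g x ^ 2 ≤ 1 := by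
      rw [hc, div_mul_eq_mul_div, div_le_one (by positivity)]
      nlinarith
    linarith
  have hi2 : Integrable (fun x => 1 - c * g x ^ 2) ν := (integrable_const _).sub (hint.const_mul _)
  rw [← ofReal_integral_eq_lintegral_ofReal hi2
    (Filter.Eventually.of_forall hcB), integral_sub (integrable_const _) (hint.const_mul _), integral_const_mul]
  apply ENNReal.ofReal_le_ofReal
  simp only [integral_const, probReal_univ, smul_eq_mul, mul_one]
  have := Real.add_one_le_exp (- c * ∫ x, g x ^ 2 ∂ν)
  linarith

lemma chernoff {E : Type*} [MeasurableSpace E] (ν : Measure E) [IsProbabilityMeasure ν]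
    (g : E → ℝ) (hg : Measurable g) (B : ℝ) (hB : ∀ x, |g x| ≤ B) (σ l c : ℝ) (hl : 0 < l)
    (hσl : 4 * σ ^ 2 * l = 1) (hc : c = l / 2 / (1 + l / 2 * B ^ 2))
    {Ω₀ : Type*} [MeasurableSpace Ω₀] (P : Measure Ω₀) [IsProbabilityMeasure P]
    (s : ℕ → Ω₀ → E) (ξ : ℕ → Ω₀ → ℝ)
    (hmeas : ∀ i, Measurable (s i)) (hmeasξ : ∀ i, Measurable (ξ i))
    (hindep : iIndepFun (fun i ω => (s i ω, ξ i ω)) P)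
    (hdist : ∀ i, P.map (fun ω => (s i ω, ξ i ω)) = ν.prod (gaussianReal 0 1)) (n : ℕ) (t : ℝ) :
    P {ω | ∑ i ∈ Finset.range n, (g (s i ω) ^ 2 - 2 * σ * ξ i ω * g (s i ω)) ≤ t} ≤
      ENNReal.ofReal (Real.exp (l * t - n * (c * ∫ x, g x ^ 2 ∂ν))) := by
  let φ : E × ℝ → ENNReal := fun p => ENNReal.ofReal (Real.exp (-l * (g p.1 ^ 2 - 2 * σ * p.2 * g p.1)))
  have hφ : Measurable φ := by fun_prop
  have hX : iIndepFun (fun i ω => φ (s i ω, ξ i ω)) P := hindep.comp (fun _ => φ) (fun _ => hφ)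
  have hXm : ∀ i, Measurable (fun ω => φ (s i ω, ξ i ω)) :=
    fun i => hφ.comp ((hmeas i).prodMk (hmeasξ i))
  have h1 := lintegral_prod_eq_prod_lintegral_of_indepFun (Finset.range n) _ hX hXm
  have h2 : ∀ i, ∫⁻ ω, φ (s i ω, ξ i ω) ∂P ≤ ENNReal.ofReal (Real.exp (- c * ∫ x, g x ^ 2 ∂ν)) := by
    intro i
    have := lintegral_map (μ := P) hφ ((hmeas i).prodMk (hmeasξ i))
    rw [← this, hdist i]
    exact single_mgf ν g hg B hB σ l c hl hσl hc
  have h3 : ∫⁻ ω, ∏ i ∈ Finset.range n, φ (s i ω, ξ i ω) ∂P ≤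
      ENNReal.ofReal (Real.exp (- (n * (c * ∫ x, g x ^ 2 ∂ν)))) := by
    rw [h1]
    refine (Finset.prod_le_prod' (fun i _ => h2 i)).trans (le_of_eq ?_)
    rw [Finset.prod_const, Finset.card_range, ← ENNReal.ofReal_pow (Real.exp_nonneg _), ← Real.exp_nat_mul]
    congr 2; ring
  have h4 := mul_meas_ge_le_lintegral (μ := P) (Finset.measurable_prod (Finset.range n) (fun i _ => hXm i))
    (ENNReal.ofReal (Real.exp (-(l * t))))
  have h5 : {ω | ∑ i ∈ Finset.range n, (g (s i ω) ^ 2 - 2 * σ * ξ i ω * g (s i ω)) ≤ t} ⊆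
      {ω | ENNReal.ofReal (Real.exp (-(l * t))) ≤ ∏ i ∈ Finset.range n, φ (s i ω, ξ i ω)} := by
    intro ω hω
    simp only [Set.mem_ofPred_eq, φ] at hω ⊢
    rw [← ENNReal.ofReal_prod_of_nonneg (fun _ _ => Real.exp_nonneg _), ← Real.exp_sum, ← Finset.mul_sum]
    apply ENNReal.ofReal_le_ofReal
    apply Real.exp_le_exp.2
    nlinarith
  calc _ ≤ _ := measure_mono h5
    _ = ENNReal.ofReal (Real.exp (l * t)) * (ENNReal.ofReal (Real.exp (-(l * t))) *
        P {ω | ENNReal.ofReal (Real.exp (-(l * t))) ≤ ∏ i ∈ Finset.range n, φ (s i ω, ξ i ω)}) := by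
        rw [← mul_assoc, ← ENNReal.ofReal_mul (Real.exp_nonneg _), ← Real.exp_add]
        simp
    _ ≤ ENNReal.ofReal (Real.exp (l * t)) * ENNReal.ofReal (Real.exp (- (n * (c * ∫ x, g x ^ 2 ∂ν)))) := by
        gcongr
        exact h4.trans h3
    _ = _ := by
        rw [← ENNReal.ofReal_mul (Real.exp_nonneg _), ← Real.exp_add]
        congr 2

lemma noise_tail {E : Type*} [MeasurableSpace E] (ν : Measure E) [IsProbabilityMeasure ν]
    {Ω₀ : Type*} [MeasurableSpace Ω₀] (P : Measure Ω₀) [IsProbabilityMeasure P]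
    (s : ℕ → Ω₀ → E) (ξ : ℕ → Ω₀ → ℝ)
    (hmeas : ∀ i, Measurable (s i)) (hmeasξ : ∀ i, Measurable (ξ i))
    (hdist : ∀ i, P.map (fun ω => (s i ω, ξ i ω)) = ν.prod (gaussianReal 0 1))
    (η : ℝ) (hη : 0 < η) :
    ∃ M > (0:ℝ), ∀ n : ℕ, 0 < n →
      P {ω | n * M ≤ ∑ i ∈ Finset.range n, |ξ i ω|} ≤ ENNReal.ofReal η := by
  set m₁ : ℝ := ∫ y, |y| ∂(gaussianReal 0 1)
  have hm : 0 ≤ m₁ := integral_nonneg fun _ => abs_nonneg _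
  have hI : Integrable (fun y : ℝ => |y|) (gaussianReal 0 1) :=
    ((memLp_id_gaussianReal 1).integrable (by simp)).abs
  have hξ : ∀ i, P.map (ξ i) = gaussianReal 0 1 := by
    intro i
    have : ξ i = Prod.snd ∘ (fun ω => (s i ω, ξ i ω)) := rfl
    rw [this, ← Measure.map_map measurable_snd ((hmeas i).prodMk (hmeasξ i)), hdist i,
      Measure.map_snd_prod]
    simp
  have hIi : ∀ i, Integrable (fun ω => |ξ i ω|) P := by
    intro i
    have : Integrable (fun y : ℝ => |y|) (P.map (ξ i)) := by rw [hξ]; exact hI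
    exact this.comp_measurable (hmeasξ i)
  have hEi : ∀ i, ∫ ω, |ξ i ω| ∂P = m₁ := by
    intro i
    have := integral_map (μ := P) (hmeasξ i).aemeasurable (f := fun y : ℝ => |y|) (by fun_prop)
    rw [← this, hξ]
  refine ⟨(m₁ + 1) / η, by positivity, fun n hn => ?_⟩
  have hn' : (0:ℝ) < n := by exact_mod_cast hn
  have h := mul_meas_ge_le_integral_of_nonneg (μ := P) (f := fun ω => ∑ i ∈ Finset.range n, |ξ i ω|)
    (Filter.Eventually.of_forall fun ω => Finset.sum_nonneg fun i _ => abs_nonneg _)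
    (integrable_finsetSum _ fun i _ => hIi i) (n * ((m₁ + 1) / η))
  rw [integral_finsetSum _ (fun i _ => hIi i)] at h
  simp only [hEi, Finset.sum_const, Finset.card_range, nsmul_eq_mul] at h
  rw [← ofReal_measureReal]
  apply ENNReal.ofReal_le_ofReal
  set p := P.real {ω | n * ((m₁ + 1) / η) ≤ ∑ i ∈ Finset.range n, |ξ i ω|}
  have h2 : (m₁ + 1) / η * p ≤ m₁ := by
    rw [mul_assoc] at h
    exact le_of_mul_le_mul_left h hn'
  have h3 : (m₁ + 1) * p ≤ m₁ * η := by
    rw [div_mul_eq_mul_div, div_le_iff₀ hη] at h2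
    exact h2
  have h4 : 0 < m₁ + 1 := by linarith
  by_contra hcon
  push Not at hcon
  nlinarith

/-- Parametric-rate convergence of constrained least squares over the PDE solution manifold
`Γ(Θ)`: with i.i.d. design `s_i ~ ν`, Gaussian noise, `Θ ⊆ ℝ^d` compact and `Γ` Lipschitz
into bounded continuous functions, for every `η > 0` there are `K > 0` and `N` such that for
all `n ≥ N` and every measurable selection `θ̂` of a least-squares minimizer over `Γ(Θ)`,
`P(∫_Ω (Γ(θ̂) − u⋆)² dν > K (d/n) log(n/d)) ≤ η`. -/
theorem stmt_3 {m d : ℕ} (hd : 0 < d)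
    (Ωs : Set (EuclideanSpace ℝ (Fin m))) (hΩo : IsOpen Ωs) (hΩb : Bornology.IsBounded Ωs)
    (ν : Measure (EuclideanSpace ℝ (Fin m))) [IsProbabilityMeasure ν] (hν : ν Ωs = 1)
    (Θ : Set (EuclideanSpace ℝ (Fin d))) (hΘ : IsCompact Θ)
    (Γ : EuclideanSpace ℝ (Fin d) → EuclideanSpace ℝ (Fin m) → ℝ)
    (hcont : ∀ θ ∈ Θ, ContinuousOn (Γ θ) Ωs)
    (hbdd : ∀ θ ∈ Θ, ∃ B : ℝ, ∀ x ∈ Ωs, |Γ θ x| ≤ B)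
    (L : ℝ) (hL : 0 < L)
    (hLip : ∀ θ₁ ∈ Θ, ∀ θ₂ ∈ Θ, ∀ x ∈ Ωs, |Γ θ₁ x - Γ θ₂ x| ≤ L * ‖θ₁ - θ₂‖)
    (θstar : EuclideanSpace ℝ (Fin d)) (hθstar : θstar ∈ Θ)
    (σ : ℝ) (hσ : 0 < σ)
    (Ω₀ : Type*) [MeasurableSpace Ω₀] (P : Measure Ω₀) [IsProbabilityMeasure P]
    (s : ℕ → Ω₀ → EuclideanSpace ℝ (Fin m)) (ξ : ℕ → Ω₀ → ℝ)
    (hmeas : ∀ i, Measurable (s i)) (hmeasξ : ∀ i, Measurable (ξ i))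
    -- the pairs `(s_i, ξ_i)` are i.i.d., with `s_i ~ ν` independent of `ξ_i ~ N(0,1)`
    (hindep : iIndepFun (fun i ω => (s i ω, ξ i ω)) P)
    (hdist : ∀ i, P.map (fun ω => (s i ω, ξ i ω)) = ν.prod (gaussianReal 0 1)) :
    ∀ η > (0 : ℝ), ∃ K > (0 : ℝ), ∃ N : ℕ, ∀ n ≥ N,
      ∀ θhat : Ω₀ → EuclideanSpace ℝ (Fin d), Measurable θhat →
        (∀ ω, θhat ω ∈ Θ) →
        -- `û_n = Γ(θ̂)` minimizes the empirical squared error over `Γ(Θ)`,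
        -- where `Y_i = u⋆(s_i) + σ ξ_i`
        (∀ ω, ∀ θ ∈ Θ,
          ∑ i ∈ Finset.range n,
              ((Γ θstar (s i ω) + σ * ξ i ω) - Γ (θhat ω) (s i ω)) ^ 2 ≤
            ∑ i ∈ Finset.range n,
              ((Γ θstar (s i ω) + σ * ξ i ω) - Γ θ (s i ω)) ^ 2) →
        P {ω | K * ((d : ℝ) / n) * Real.log ((n : ℝ) / d) <
            ∫ x in Ωs, (Γ (θhat ω) x - Γ θstar x) ^ 2 ∂ν} ≤ ENNReal.ofReal η := by
  classical
  intro η hη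
  -- radius
  obtain ⟨R₀, hR₀⟩ := hΘ.isBounded.exists_norm_le
  obtain ⟨R, hR₁⟩ := exists_nat_ge R₀
  have hR : ∀ θ ∈ Θ, ‖θ‖ ≤ R := fun θ hθ => (hR₀ θ hθ).trans hR₁
  have hΩm : MeasurableSet Ωs := hΩo.measurableSet
  set B : ℝ := L * (2 * R) with hBdef
  have hB0 : 0 ≤ B := by positivity
  let g : EuclideanSpace ℝ (Fin d) → EuclideanSpace ℝ (Fin m) → ℝ :=
    fun θ => Ωs.indicator (fun x => Γ θ x - Γ θstar x)
  have hgm : ∀ θ ∈ Θ, Measurable (g θ) := by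
    intro θ hθ
    have : ContinuousOn (fun x => Γ θ x - Γ θstar x) Ωs := (hcont θ hθ).sub (hcont θstar hθstar)
    have h2 := this.measurable_piecewise (g := fun _ => (0:ℝ)) continuousOn_const hΩm
    have h3 : g θ = Ωs.piecewise (fun x => Γ θ x - Γ θstar x) (fun _ => (0:ℝ)) :=
      (Set.piecewise_eq_indicator (s := Ωs)).symm
    rw [h3]
    exact h2
  have hgin : ∀ θ, ∀ x ∈ Ωs, g θ x = Γ θ x - Γ θstar x := fun θ x hx => Set.indicator_of_mem hx _
  have hgout : ∀ θ, ∀ x, x ∉ Ωs → g θ x = 0 := fun θ x hx => Set.indicator_of_notMem hx _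
  have hgB : ∀ θ ∈ Θ, ∀ x, |g θ x| ≤ B := by
    intro θ hθ x
    by_cases hx : x ∈ Ωs
    · rw [hgin θ x hx]
      refine (hLip θ hθ θstar hθstar x hx).trans ?_
      have h1 := norm_sub_le θ θstar
      have h2 := hR θ hθ
      have h3 := hR θstar hθstar
      rw [hBdef]
      gcongr
      linarith
    · rw [hgout θ x hx]; simpa using hB0
  have hgL : ∀ θ ∈ Θ, ∀ θ' ∈ Θ, ∀ x, |g θ x - g θ' x| ≤ L * ‖θ - θ'‖ := by
    intro θ hθ θ' hθ' x
    by_cases hx : x ∈ Ωs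
    · rw [hgin θ x hx, hgin θ' x hx]
      have := hLip θ hθ θ' hθ' x hx
      convert this using 2
      ring
    · rw [hgout θ x hx, hgout θ' x hx]
      simp; positivity
  have hgint : ∀ θ ∈ Θ, Integrable (fun x => g θ x ^ 2) ν := by
    intro θ hθ
    apply Integrable.of_bound ((hgm θ hθ).pow_const 2).aestronglyMeasurable (B ^ 2)
    filter_upwards with x
    rw [Real.norm_eq_abs, abs_of_nonneg (sq_nonneg _), ← sq_abs]
    exact pow_le_pow_left₀ (abs_nonneg _) (hgB θ hθ x) 2
  have hgI : ∀ θ, ∫ x in Ωs, (Γ θ x - Γ θstar x) ^ 2 ∂ν = ∫ x, g θ x ^ 2 ∂ν := by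
    intro θ
    rw [← integral_indicator hΩm]
    congr 1
    ext x
    by_cases hx : x ∈ Ωs
    · rw [Set.indicator_of_mem hx, hgin θ x hx]
    · rw [Set.indicator_of_notMem hx, hgout θ x hx]; simp
  -- constants
  obtain ⟨M, hM, hMn⟩ := noise_tail ν P s ξ hmeas hmeasξ hdist (η / 2) (by positivity)
  set l : ℝ := 1 / (4 * σ ^ 2) with hldef
  have hl : 0 < l := by positivity
  have hσl : 4 * σ ^ 2 * l = 1 := by rw [hldef]; field_simp
  obtain ⟨c, hc⟩ : ∃ c : ℝ, c = l / 2 / (1 + l / 2 * B ^ 2) := ⟨_, rfl⟩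
  have hc0 : 0 < c := by rw [hc]; positivity
  have hd' : (0:ℝ) < d := by exact_mod_cast hd
  set t : ℝ := L * d * (2 * B + 2 * σ * M) with htdef
  set A : ℝ := ((2 * R + 1 : ℕ) : ℝ) ^ d * Real.exp (l * t + c * (2 * B * (L * d))) * (d:ℝ) ^ (2 * d) with hA
  have hA0 : 0 < A := by positivity
  obtain ⟨N, hN⟩ := exists_nat_ge (2 * A / η)
  refine ⟨2 / c, by positivity, N + 1, fun n hn θhat _ hθhat hmin => ?_⟩
  have hn0 : 0 < n := by omega
  have hn' : (0:ℝ) < n := by exact_mod_cast hn0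
  have hn1 : (1:ℝ) ≤ n := by exact_mod_cast hn0
  have hnN : (N:ℝ) ≤ n := by exact_mod_cast (by omega : N ≤ n)
  obtain ⟨T, hTΘ, hTcard, hTcov⟩ := net_exists hd Θ R hR n hn0
  set r : ℝ := 2 / c * ((d : ℝ) / n) * Real.log ((n : ℝ) / d) with hr
  set ε : ℝ := L * (d / n) with hε
  let T' := T.filter (fun θ => r - 2 * B * ε ≤ ∫ x, g θ x ^ 2 ∂ν)
  let E0 : Set Ω₀ := ⋃ i, {ω | s i ω ∉ Ωs}
  let E1 : Set Ω₀ := {ω | n * M ≤ ∑ i ∈ Finset.range n, |ξ i ω|}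
  let E2 : EuclideanSpace ℝ (Fin d) → Set Ω₀ := fun θ =>
    {ω | ∑ i ∈ Finset.range n, (g θ (s i ω) ^ 2 - 2 * σ * ξ i ω * g θ (s i ω)) ≤ t}
  have hE0 : P E0 = 0 := by
    refine measure_iUnion_null fun i => ?_
    have hs : P.map (s i) = ν := by
      have : s i = Prod.fst ∘ (fun ω => (s i ω, ξ i ω)) := rfl
      rw [this, ← Measure.map_map measurable_fst ((hmeas i).prodMk (hmeasξ i)), hdist i,
        Measure.map_fst_prod]
      simp
    have h1 : P.map (s i) Ωsᶜ = 0 := by rw [hs]; exact (prob_compl_eq_zero_iff hΩm).2 hν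
    rw [Measure.map_apply (hmeas i) hΩm.compl] at h1
    exact h1
  have hsub : {ω | r < ∫ x in Ωs, (Γ (θhat ω) x - Γ θstar x) ^ 2 ∂ν} ⊆
      E0 ∪ E1 ∪ ⋃ θ ∈ T', E2 θ := by
    intro ω hω
    have hω' : r < ∫ x, g (θhat ω) x ^ 2 ∂ν := by rw [← hgI]; exact hω
    by_cases h0 : ω ∈ E0
    · exact Or.inl (Or.inl h0)
    by_cases h1 : ω ∈ E1
    · exact Or.inl (Or.inr h1)
    right
    have hsin : ∀ i, s i ω ∈ Ωs := by
      intro i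
      by_contra hcon
      exact h0 (Set.mem_iUnion.2 ⟨i, hcon⟩)
    have hξ1 : ∑ i ∈ Finset.range n, |ξ i ω| < n * M := not_le.1 h1
    have hθ := hθhat ω
    set θ := θhat ω with hθdef
    obtain ⟨θ', hθ'T, hdist'⟩ := hTcov θ hθ
    have hθ' := hTΘ θ' hθ'T
    have hε0 : 0 ≤ ε := by positivity
    have hgε : ∀ x, |g θ x - g θ' x| ≤ ε := fun x =>
      (hgL θ hθ θ' hθ' x).trans (by rw [hε]; gcongr)
    have hsq : ∀ x, |g θ' x ^ 2 - g θ x ^ 2| ≤ 2 * B * ε := by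
      intro x
      have h1 := hgε x
      have h2 := hgB θ hθ x
      have h3 := hgB θ' hθ' x
      have : g θ' x ^ 2 - g θ x ^ 2 = -((g θ' x + g θ x) * (g θ x - g θ' x)) := by ring
      rw [this, abs_neg, abs_mul]
      have h4 := abs_add_le (g θ' x) (g θ x)
      gcongr
      linarith
    simp only [Set.mem_iUnion]
    refine ⟨θ', ?_, ?_⟩
    · refine Finset.mem_filter.2 ⟨hθ'T, ?_⟩
      have h2 : ∫ x, g θ x ^ 2 ∂ν ≤ ∫ x, (g θ' x ^ 2 + 2 * B * ε) ∂ν := by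
        apply integral_mono (hgint θ hθ) ((hgint θ' hθ').add (integrable_const _))
        intro x
        have := abs_le.1 (hsq x)
        change g θ x ^ 2 ≤ g θ' x ^ 2 + 2 * B * ε
        linarith [this.1]
      rw [integral_add (hgint θ' hθ') (integrable_const _)] at h2
      simp only [integral_const, probReal_univ, smul_eq_mul, one_mul] at h2
      linarith
    · change ∑ i ∈ Finset.range n, (g θ' (s i ω) ^ 2 - 2 * σ * ξ i ω * g θ' (s i ω)) ≤ t
      have hZ : ∑ i ∈ Finset.range n, (g θ (s i ω) ^ 2 - 2 * σ * ξ i ω * g θ (s i ω)) ≤ 0 := by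
        have h := hmin ω θstar hθstar
        rw [← sub_nonpos, ← Finset.sum_sub_distrib] at h
        refine le_trans (le_of_eq (Finset.sum_congr rfl fun i _ => ?_)) h
        rw [hgin θ _ (hsin i)]
        ring
      have hterm : ∀ i ∈ Finset.range n, g θ' (s i ω) ^ 2 - 2 * σ * ξ i ω * g θ' (s i ω) ≤
          (g θ (s i ω) ^ 2 - 2 * σ * ξ i ω * g θ (s i ω)) + (2 * B * ε + 2 * σ * ε * |ξ i ω|) := by
        intro i _
        have h1 := (abs_le.1 (hsq (s i ω))).2
        have h2 : ξ i ω * (g θ (s i ω) - g θ' (s i ω)) ≤ |ξ i ω| * ε := by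
          refine (le_abs_self _).trans ?_
          rw [abs_mul]
          gcongr
          exact hgε _
        nlinarith
      refine (Finset.sum_le_sum hterm).trans ?_
      rw [Finset.sum_add_distrib, Finset.sum_add_distrib, ← Finset.mul_sum _ _ (2 * σ * ε), Finset.sum_const,
        Finset.card_range, nsmul_eq_mul]
      have hnε : n * ε = L * d := by rw [hε]; field_simp
      have h3 : 2 * σ * ε * ∑ i ∈ Finset.range n, |ξ i ω| ≤ 2 * σ * ε * (n * M) := by gcongr
      have h4 : t = n * (2 * B * ε) + 2 * σ * ε * (n * M) := by
        rw [htdef, ← hnε]; ring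
      linarith
  have hE2 : ∀ θ ∈ T', P (E2 θ) ≤
      ENNReal.ofReal (Real.exp (l * t + c * (2 * B * (L * d))) * ((d:ℝ) / n) ^ (2 * d)) := by
    intro θ hθ
    obtain ⟨hθT, hθr⟩ := Finset.mem_filter.1 hθ
    have hθΘ := hTΘ θ hθT
    refine (chernoff ν (g θ) (hgm θ hθΘ) B (hgB θ hθΘ) σ l c hl hσl hc P s ξ hmeas hmeasξ
      hindep hdist n t).trans ?_
    apply ENNReal.ofReal_le_ofReal
    have e1 : ((d:ℝ) / n) ^ (2 * d) = Real.exp (-(2 * d * Real.log ((n:ℝ) / d))) := by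
      rw [← Real.exp_log (show (0:ℝ) < ((d:ℝ) / n) ^ (2 * d) by positivity), Real.log_pow,
        ← inv_div (n:ℝ) d, Real.log_inv]
      push_cast
      congr 1; ring
    rw [e1, ← Real.exp_add]
    apply Real.exp_le_exp.2
    have h1 : n * (c * (r - 2 * B * ε)) = 2 * d * Real.log ((n:ℝ) / d) - c * (2 * B * (L * d)) := by
      rw [hr, hε]; field_simp
    have h2 : n * (c * (r - 2 * B * ε)) ≤ n * (c * ∫ x, g θ x ^ 2 ∂ν) := by gcongr
    linarith
  have hfin : (T'.card : ℝ) * (Real.exp (l * t + c * (2 * B * (L * d))) * ((d:ℝ) / n) ^ (2 * d)) ≤ η / 2 := by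
    have h1 : (T'.card : ℝ) ≤ (((2 * R + 1 : ℕ) : ℝ) * n) ^ d := by
      exact_mod_cast (Finset.card_filter_le _ _).trans hTcard
    calc _ ≤ (((2 * R + 1 : ℕ) : ℝ) * n) ^ d *
          (Real.exp (l * t + c * (2 * B * (L * d))) * ((d:ℝ) / n) ^ (2 * d)) := by gcongr
      _ = A / (n:ℝ) ^ d := by
          rw [hA, mul_pow, div_pow, two_mul d, pow_add (n:ℝ)]
          field_simp
      _ ≤ A / n := by
          gcongr
          exact le_self_pow₀ hn1 hd.ne'
      _ ≤ η / 2 := by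
          rw [div_le_div_iff₀ hn' (by norm_num)]
          rw [div_le_iff₀ hη] at hN
          nlinarith
  calc _ ≤ P (E0 ∪ E1 ∪ ⋃ θ ∈ T', E2 θ) := measure_mono hsub
    _ ≤ P E0 + P E1 + ∑ θ ∈ T', P (E2 θ) := by
        refine (measure_union_le _ _).trans ?_
        exact add_le_add (measure_union_le _ _) (measure_biUnion_finset_le _ _)
    _ ≤ 0 + ENNReal.ofReal (η / 2) + ENNReal.ofReal (η / 2) := by
        refine add_le_add (add_le_add hE0.le (hMn n hn0)) ?_
        refine (Finset.sum_le_card_nsmul _ _ _ hE2).trans ?_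
        rw [nsmul_eq_mul, ← ENNReal.ofReal_natCast, ← ENNReal.ofReal_mul (by positivity)]
        exact ENNReal.ofReal_le_ofReal hfin
    _ = ENNReal.ofReal η := by
        rw [zero_add, ← ENNReal.ofReal_add (by positivity) (by positivity)]
        congr 1; ring
end

section
/- Let q ≥ √(2π) be an integer, u ≥ 1 a real sparsity parameter with q^u ≥ 2/log 2, ρ₀ > 1, and let Π₀ be the spike-and-slab prior on ℝ^q. Fix W₀ ∈ ℝ^q with support set Λ₀ ∈ {0,1}^q (i.e., (Λ₀)_j = 1 exactly when (W₀)_j ≠ 0), let s₀ = ‖W₀‖₀, and let r > 0. Define V(W₀, r) := {V ∈ ℝ^q : the support of V equals Λ₀ and ‖V − W₀‖_∞ ≤ r}. Then Π₀(V(W₀, r)) ≥ (1/2) exp( −s₀(u+2) log q − (s₀/2)(‖W₀‖_∞ + r)² + s₀ log r ). -/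
open MeasureTheory ProbabilityTheory

/-- The number of nonzero coordinates (`ℓ⁰` "norm") of a vector in `ℝ^q`. -/
noncomputable def l0norm {q : ℕ} (V : Fin q → ℝ) : ℕ :=
  (Finset.univ.filter fun j => V j ≠ 0).card

/-- Law of a single pair `(Λ_j, W_j)`: `Λ_j ~ Ber(1/(1+q^{u+1}))`, and given `Λ_j`,
`W_j ~ N(0,1)` if `Λ_j = 1` and `W_j ~ N(0, 1/ρ₀)` if `Λ_j = 0`. -/
noncomputable def pairLaw (q : ℕ) (u ρ₀ : ℝ) : Measure (Bool × ℝ) :=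
  ENNReal.ofReal (1 / (1 + (q : ℝ) ^ (u + 1))) •
      ((Measure.dirac true).prod (gaussianReal 0 1)) +
    ENNReal.ofReal (1 - 1 / (1 + (q : ℝ) ^ (u + 1))) •
      ((Measure.dirac false).prod (gaussianReal 0 (1 / ρ₀).toNNReal))

/-- The spike-and-slab prior `Π₀` on `ℝ^q`: the law of the coordinatewise product `Λ ⊙ W`,
where the pairs `(Λ_j, W_j)` are i.i.d. with law `pairLaw q u ρ₀`. -/
noncomputable def spikeSlab (q : ℕ) (u ρ₀ : ℝ) : Measure (Fin q → ℝ) :=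
  (Measure.pi fun _ : Fin q => pairLaw q u ρ₀).map
    (fun ω j => if (ω j).1 then (ω j).2 else 0)

lemma gauss_lb (w r M : ℝ) (hr : 0 < r) (hM : |w| ≤ M) :
    ENNReal.ofReal ((Real.sqrt (2 * Real.pi))⁻¹ * Real.exp (-(M + r) ^ 2 / 2) * (2 * r)) ≤
      gaussianReal 0 1 (Set.Icc (w - r) (w + r) \ {0}) := by
  have h1 : gaussianReal 0 1 (Set.Icc (w - r) (w + r) \ {0})
      = gaussianReal 0 1 (Set.Icc (w - r) (w + r)) := by
    haveI : NullSingletonClass (gaussianReal 0 1) := nullSingletonClass_gaussianReal (by norm_num)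
    exact measure_sdiff_null (measure_singleton 0)
  rw [h1, gaussianReal_apply 0 (by norm_num)]
  have hc : (0:ℝ) ≤ (Real.sqrt (2 * Real.pi))⁻¹ * Real.exp (-(M + r) ^ 2 / 2) := by positivity
  calc _ = ∫⁻ x in Set.Icc (w - r) (w + r),
        ENNReal.ofReal ((Real.sqrt (2 * Real.pi))⁻¹ * Real.exp (-(M + r) ^ 2 / 2)) := by
        rw [setLIntegral_const, Real.volume_Icc, ← ENNReal.ofReal_mul hc]
        congr 2; ring
    _ ≤ _ := by
        apply setLIntegral_mono' measurableSet_Icc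
        intro x hx
        rw [gaussianPDF, gaussianPDFReal]
        apply ENNReal.ofReal_le_ofReal
        have hx2 : x ^ 2 ≤ (M + r) ^ 2 := by
          apply sq_le_sq'
          · linarith [hx.1, (abs_le.1 hM).1]
          · linarith [hx.2, (abs_le.1 hM).2]
        simp only [NNReal.coe_one, mul_one, sub_zero]
        gcongr

instance pairLaw_fin (q : ℕ) (u ρ₀ : ℝ) : IsFiniteMeasure (pairLaw q u ρ₀) := by
  unfold pairLaw
  haveI := Measure.smul_finite ((Measure.dirac true).prod (gaussianReal 0 1))
    (c := ENNReal.ofReal (1 / (1 + (q : ℝ) ^ (u + 1)))) ENNReal.ofReal_ne_top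
  haveI := Measure.smul_finite ((Measure.dirac false).prod (gaussianReal 0 (1 / ρ₀).toNNReal))
    (c := ENNReal.ofReal (1 - 1 / (1 + (q : ℝ) ^ (u + 1)))) ENNReal.ofReal_ne_top
  infer_instance

theorem stmt_7 (q : ℕ) (hq : Real.sqrt (2 * Real.pi) ≤ q) (u : ℝ) (hu : 1 ≤ u)
    (hqu : 2 / Real.log 2 ≤ (q : ℝ) ^ u) (ρ₀ : ℝ) (hρ : 1 < ρ₀)
    (W₀ : Fin q → ℝ) (r : ℝ) (hr : 0 < r) :
    ENNReal.ofReal ((1 / 2) * Real.exp (-(l0norm W₀ : ℝ) * (u + 2) * Real.log q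
        - ((l0norm W₀ : ℝ) / 2) * ((⨆ j, |W₀ j|) + r) ^ 2
        + (l0norm W₀ : ℝ) * Real.log r)) ≤
      spikeSlab q u ρ₀ {V | (∀ j, V j ≠ 0 ↔ W₀ j ≠ 0) ∧ ∀ j, |V j - W₀ j| ≤ r} := by
  have hs : 0 < Real.sqrt (2 * Real.pi) := by positivity
  have hq0 : (0:ℝ) < q := lt_of_lt_of_le hs hq
  have hq1 : (1:ℝ) ≤ q := by
    have : 0 < q := by exact_mod_cast hq0
    exact_mod_cast this
  set M := ⨆ j, |W₀ j| with hMdef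
  have hM : ∀ j, |W₀ j| ≤ M := fun j => le_ciSup (f := fun j => |W₀ j|) (Set.finite_range _).bddAbove j
  set p : ℝ := 1 / (1 + (q : ℝ) ^ (u + 1)) with hp
  set Q : ℝ := (q : ℝ) ^ (u + 1) with hQ
  have hQ1 : 1 ≤ Q := Real.one_le_rpow hq1 (by linarith)
  have hQu : Q = q ^ u * q := by rw [hQ, Real.rpow_add hq0, Real.rpow_one]
  have hu0 : 0 < (q:ℝ) ^ u := Real.rpow_pos_of_pos hq0 u
  have hp0 : 0 < p := by positivity
  have hp1 : p ≤ 1 := by rw [hp, div_le_one (by positivity)]; linarith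
  have hpQ : 1 / (2 * Q) ≤ p := by rw [hp]; gcongr; linarith
  set a : ℝ := Real.exp (-(u + 2) * Real.log q - (M + r) ^ 2 / 2 + Real.log r) with ha
  have ha0 : 0 < a := Real.exp_pos _
  have haeq : a = (Q * q)⁻¹ * Real.exp (-(M + r) ^ 2 / 2) * r := by
    have h1 : Real.exp (-(u + 2) * Real.log q) = (Q * q)⁻¹ := by
      have : Q * q = Real.exp ((u + 2) * Real.log q) := by
        rw [mul_comm (u+2), ← Real.rpow_def_of_pos hq0, show u + 2 = (u + 1) + 1 by ring,
          Real.rpow_add hq0 (u+1), Real.rpow_one]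
      rw [this, ← Real.exp_neg]; congr 1; ring
    rw [ha, Real.exp_add, Real.exp_log hr, sub_eq_add_neg, Real.exp_add, h1]
    congr 3; ring
  have hale : a ≤ p * ((Real.sqrt (2 * Real.pi))⁻¹ * Real.exp (-(M + r) ^ 2 / 2) * (2 * r)) := by
    calc a = 1 / (2 * Q) * ((q:ℝ)⁻¹ * Real.exp (-(M + r) ^ 2 / 2) * (2 * r)) := by
          rw [haeq]; field_simp
      _ ≤ _ := by gcongr
  have hbern : 1 / 2 ≤ (1 - p) ^ q := by
    have h1 := one_add_mul_le_pow (a := -p) (by linarith) q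
    have h2 : (q:ℝ) * p ≤ 1 / 2 := by
      have hl : Real.log 2 ≤ 1 := by linarith [Real.log_two_lt_d9]
      have hl0 : 0 < Real.log 2 := Real.log_pos (by norm_num)
      have h3 : 2 ≤ (q:ℝ) ^ u := by
        refine le_trans ?_ hqu
        rw [le_div_iff₀ hl0]; linarith
      rw [hp, mul_one_div, div_le_iff₀ (by positivity), hQu]
      nlinarith
    have : (1 - p) = 1 + -p := by ring
    rw [this]; linarith
  -- measure side
  have hf : Measurable (fun (ω : Fin q → Bool × ℝ) (j : Fin q) => if (ω j).1 then (ω j).2 else (0:ℝ)) := by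
    refine measurable_pi_lambda _ fun j => Measurable.ite ?_ (by fun_prop) measurable_const
    exact (measurable_fst.comp (measurable_pi_apply j)) (measurableSet_singleton true)
  have hset : MeasurableSet {V : Fin q → ℝ | (∀ j, V j ≠ 0 ↔ W₀ j ≠ 0) ∧ ∀ j, |V j - W₀ j| ≤ r} := by
    have : {V : Fin q → ℝ | (∀ j, V j ≠ 0 ↔ W₀ j ≠ 0) ∧ ∀ j, |V j - W₀ j| ≤ r}
      = Set.univ.pi fun j => {x : ℝ | x ≠ 0 ↔ W₀ j ≠ 0} ∩ {x | |x - W₀ j| ≤ r} := by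
      ext V; simp [Set.mem_pi, forall_and]
    rw [this]
    refine MeasurableSet.univ_pi fun j => MeasurableSet.inter ?_ ?_
    · by_cases h : W₀ j = 0
      · simp [h]
      · simp only [ne_eq, h, not_false_eq_true, iff_true]
        exact (measurableSet_singleton (0:ℝ)).compl
    · exact measurableSet_le (by fun_prop) measurable_const
  have hsub : (Set.univ.pi fun j => if W₀ j ≠ 0 then
        ({true} ×ˢ (Set.Icc (W₀ j - r) (W₀ j + r) \ {0}) : Set (Bool × ℝ))
        else {false} ×ˢ Set.univ) ⊆
      (fun (ω : Fin q → Bool × ℝ) (j : Fin q) => if (ω j).1 then (ω j).2 else (0:ℝ)) ⁻¹'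
        {V : Fin q → ℝ | (∀ j, V j ≠ 0 ↔ W₀ j ≠ 0) ∧ ∀ j, |V j - W₀ j| ≤ r} := by
    intro ω hω
    simp only [Set.mem_preimage, Set.mem_ofPred_eq, ← forall_and]
    intro j
    have h := hω j (Set.mem_univ j)
    by_cases hj : W₀ j = 0
    · simp [hj] at h
      simp [h, hj, hr.le]
    · simp [hj] at h
      obtain ⟨h1, ⟨h2, h3⟩, h4⟩ := h
      simp only [h1, if_true, ne_eq, h4, hj, not_false_eq_true, true_and]
      rw [abs_le]; constructor <;> linarith
  rw [spikeSlab, Measure.map_apply hf hset]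
  refine le_trans ?_ (measure_mono hsub)
  rw [Measure.pi_pi]
  have hfac : ∀ j, ENNReal.ofReal (if W₀ j ≠ 0 then a else 1 - p) ≤
      pairLaw q u ρ₀ (if W₀ j ≠ 0 then
        ({true} ×ˢ (Set.Icc (W₀ j - r) (W₀ j + r) \ {0}) : Set (Bool × ℝ))
        else {false} ×ˢ Set.univ) := by
    intro j
    by_cases hj : W₀ j = 0
    · simp only [hj, ne_eq, not_true_eq_false, if_false]
      rw [pairLaw, Measure.add_apply, Measure.smul_apply, Measure.smul_apply,
        Measure.prod_prod, Measure.prod_prod]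
      simp [hp, hQ]
    · simp only [hj, ne_eq, not_false_eq_true, if_true]
      rw [pairLaw, Measure.add_apply, Measure.smul_apply, Measure.smul_apply,
        Measure.prod_prod]
      refine le_trans ?_ le_self_add
      simp only [Measure.dirac_apply, Set.indicator_of_mem, Set.mem_singleton_iff, Pi.one_apply,
        one_mul, smul_eq_mul]
      refine le_trans (ENNReal.ofReal_le_ofReal hale) ?_
      rw [ENNReal.ofReal_mul hp0.le]
      exact mul_le_mul_right (gauss_lb _ _ _ hr (hM j)) _
  refine le_trans ?_ (Finset.prod_le_prod' fun j _ => hfac j)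
  rw [← ENNReal.ofReal_prod_of_nonneg]
  swap
  · intro j _; split_ifs <;> linarith
  apply ENNReal.ofReal_le_ofReal
  rw [Finset.prod_ite, Finset.prod_const, Finset.prod_const]
  change _ ≤ a ^ (l0norm W₀) * _
  have he : Real.exp (-(l0norm W₀ : ℝ) * (u + 2) * Real.log q
        - ((l0norm W₀ : ℝ) / 2) * (M + r) ^ 2 + (l0norm W₀ : ℝ) * Real.log r) = a ^ (l0norm W₀) := by
    rw [ha, ← Real.exp_nat_mul]; congr 1; ring
  rw [he, mul_comm]
  gcongr
  refine hbern.trans (pow_le_pow_of_le_one (by linarith) (by linarith) ?_)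
  exact (Finset.card_le_univ _).trans (by simp)
end

section
/- Let X be a real-valued random variable on a probability space and let K, R > 0 be such that E[|X|^m] ≤ (1/2) m! K^{m−2} R² for every integer m ≥ 2 (the Bernstein condition with parameters (K, R)). Then E[e^{|X|/(2K)} − 1 − |X|/(2K)] is finite and the Bernstein norm satisfies ρ_{2K}(X)² := 2(2K)² E[e^{|X|/(2K)} − 1 − |X|/(2K)] ≤ 2R², i.e. ρ_{2K}(X) ≤ √2 R. -/
open MeasureTheory

/-- If `X` satisfies the Bernstein moment condition `E[|X|^m] ≤ (1/2) m! K^{m−2} R²` for all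
integers `m ≥ 2`, then `E[e^{|X|/(2K)} − 1 − |X|/(2K)]` is finite and the Bernstein norm
satisfies `ρ_{2K}(X)² = 2(2K)² E[e^{|X|/(2K)} − 1 − |X|/(2K)] ≤ 2R²`. -/
theorem stmt_12 {Ω₀ : Type*} [MeasurableSpace Ω₀] (P : Measure Ω₀) [IsProbabilityMeasure P]
    (X : Ω₀ → ℝ) (hX : Measurable X) (K R : ℝ) (hK : 0 < K) (hR : 0 < R)
    (hbern : ∀ m : ℕ, 2 ≤ m →
      ∫⁻ ω, ENNReal.ofReal (|X ω| ^ m) ∂P ≤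
        ENNReal.ofReal ((1 / 2) * (Nat.factorial m) * K ^ (m - 2) * R ^ 2)) :
    (∫⁻ ω, ENNReal.ofReal (Real.exp (|X ω| / (2 * K)) - 1 - |X ω| / (2 * K)) ∂P) ≠ ⊤ ∧
      2 * (2 * K) ^ 2 *
          (∫⁻ ω, ENNReal.ofReal (Real.exp (|X ω| / (2 * K)) - 1 - |X ω| / (2 * K)) ∂P).toReal ≤
        2 * R ^ 2 := by
  have key : (∫⁻ ω, ENNReal.ofReal (Real.exp (|X ω| / (2 * K)) - 1 - |X ω| / (2 * K)) ∂P)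
      ≤ ENNReal.ofReal (R ^ 2 / (4 * K ^ 2)) := by
    have hexp : ∀ y : ℝ, 0 ≤ y → ENNReal.ofReal (Real.exp y - 1 - y)
        = ∑' n : ℕ, ENNReal.ofReal (y ^ (n + 2) / (Nat.factorial (n + 2))) := by
      intro y hy
      have h1 : HasSum (fun n : ℕ => y ^ n / (Nat.factorial n : ℝ)) (Real.exp y) := by
        rw [Real.exp_eq_exp_ℝ]
        exact NormedSpace.expSeries_div_hasSum_exp y
      have h2 : HasSum (fun n : ℕ => y ^ (n + 2) / (Nat.factorial (n + 2) : ℝ))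
          (Real.exp y - 1 - y) := by
        have h3 := (hasSum_nat_add_iff' 2).mpr h1
        simpa [Finset.sum_range_succ, sub_sub] using h3
      rw [← h2.tsum_eq, ENNReal.ofReal_tsum_of_nonneg (fun n => by positivity) h2.summable]
    have hgeo : HasSum (fun n : ℕ => R ^ 2 / (8 * K ^ 2) * (1 / 2 : ℝ) ^ n)
        (R ^ 2 / (4 * K ^ 2)) := by
      have h4 : R ^ 2 / (4 * K ^ 2) = R ^ 2 / (8 * K ^ 2) * 2 := by
        field_simp
        norm_num
      rw [h4]
      exact hasSum_geometric_two.mul_left (R ^ 2 / (8 * K ^ 2))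
    rw [← hgeo.tsum_eq, ENNReal.ofReal_tsum_of_nonneg (fun n => by positivity) hgeo.summable]
    simp_rw [fun ω => hexp (|X ω| / (2 * K)) (by positivity)]
    have habs : Measurable fun ω => |X ω| := hX.abs
    rw [lintegral_tsum (fun n => by fun_prop)]
    refine ENNReal.tsum_le_tsum fun n => ?_
    have hc : (0 : ℝ) ≤ ((2 * K) ^ (n + 2) * (Nat.factorial (n + 2)))⁻¹ := by positivity
    have he : ∀ ω, ENNReal.ofReal ((|X ω| / (2 * K)) ^ (n + 2) / (Nat.factorial (n + 2)))
        = ENNReal.ofReal (((2 * K) ^ (n + 2) * (Nat.factorial (n + 2)))⁻¹)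
          * ENNReal.ofReal (|X ω| ^ (n + 2)) := by
      intro ω
      rw [← ENNReal.ofReal_mul hc]
      congr 1
      rw [div_pow]
      field_simp
    simp_rw [he]
    rw [lintegral_const_mul _ (by fun_prop)]
    refine (mul_le_mul_right (hbern (n + 2) (by omega)) _).trans ?_
    rw [← ENNReal.ofReal_mul hc]
    apply ENNReal.ofReal_le_ofReal
    apply le_of_eq
    have hf : ((Nat.factorial (n + 2) : ℕ) : ℝ) ≠ 0 := by positivity
    rw [Nat.add_sub_cancel, mul_pow, one_div_pow, pow_add, pow_add]
    field_simp
    norm_num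
  refine ⟨ne_top_of_le_ne_top ENNReal.ofReal_ne_top key, ?_⟩
  have h := ENNReal.toReal_mono ENNReal.ofReal_ne_top key
  rw [ENNReal.toReal_ofReal (by positivity)] at h
  calc _ ≤ 2 * (2 * K) ^ 2 * (R ^ 2 / (4 * K ^ 2)) := by gcongr
    _ = 2 * R ^ 2 := by field_simp; norm_num
end

section
/- Let H be a real inner product space, d a positive integer, λ > 0, and h = (h₁,…,h_d) ∈ H^d. Define Σ ∈ ℝ^{d×d} by Σ_{jk} = ⟨h_j, h_k⟩ + (1/λ)·1{j=k}. Suppose g = Σ_{j=1}^d (θ⋆)_j h_j for some θ⋆ ∈ ℝ^d, and let J := min_{θ∈ℝ^d} [ ‖g − Σ_{j=1}^d θ_j h_j‖² + (1/λ)‖θ‖₂² ]. Then J = (1/λ) θ⋆ᵀ (I − (1/λ) Σ^{−1}) θ⋆, and consequently J ≤ ‖θ⋆‖₂² / λ. -/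
open Matrix

/-- `Σ_{jk} = ⟨h_j, h_k⟩ + (1/λ)·1{j=k}`. -/
noncomputable def ridgeMat {H : Type*} [NormedAddCommGroup H] [InnerProductSpace ℝ H]
    {d : ℕ} (lam : ℝ) (h : Fin d → H) : Matrix (Fin d) (Fin d) ℝ :=
  Matrix.of fun j k => (inner ℝ (h j) (h k) : ℝ) + if j = k then 1 / lam else 0

/-- The ridge objective `θ ↦ ‖g − Σ_j θ_j h_j‖² + (1/λ)‖θ‖₂²`. -/
noncomputable def ridgeLoss {H : Type*} [NormedAddCommGroup H] [InnerProductSpace ℝ H]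
    {d : ℕ} (lam : ℝ) (g : H) (h : Fin d → H) (θ : Fin d → ℝ) : ℝ :=
  ‖g - ∑ j, θ j • h j‖ ^ 2 + (1 / lam) * ∑ j, θ j ^ 2

theorem ridge_bilin {H : Type*} [NormedAddCommGroup H] [InnerProductSpace ℝ H]
    {d : ℕ} (lam : ℝ) (h : Fin d → H) (x y : Fin d → ℝ) :
    x ⬝ᵥ (ridgeMat lam h *ᵥ y) =
      inner ℝ (∑ j, x j • h j) (∑ j, y j • h j) + (1 / lam) * (x ⬝ᵥ y) := by
  simp only [dotProduct, mulVec, ridgeMat, Matrix.of_apply, sum_inner, inner_sum,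
    real_inner_smul_left, real_inner_smul_right, Finset.mul_sum, add_mul, mul_add,
    Finset.sum_add_distrib]
  congr 1
  · rw [Finset.sum_comm]
    refine Finset.sum_congr rfl fun i _ => Finset.sum_congr rfl fun j _ => by ring
  · refine Finset.sum_congr rfl fun i _ => ?_
    simp only [ite_mul, zero_mul, mul_ite, mul_zero, Finset.sum_ite_eq, Finset.mem_univ, if_true]
    ring

/-- If `g = Σ_j (θ⋆)_j h_j`, the minimum `J` of the ridge objective equals
`(1/λ) θ⋆ᵀ (I − (1/λ)Σ⁻¹) θ⋆`, and consequently `J ≤ ‖θ⋆‖₂²/λ`. -/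
theorem stmt_14 {H : Type*} [NormedAddCommGroup H] [InnerProductSpace ℝ H]
    {d : ℕ} (hd : 0 < d) (lam : ℝ) (hlam : 0 < lam) (h : Fin d → H)
    (θstar : Fin d → ℝ) (g : H) (hg : g = ∑ j, θstar j • h j) :
    IsLeast (Set.range (ridgeLoss lam g h))
      ((1 / lam) * (θstar ⬝ᵥ
        (((1 : Matrix (Fin d) (Fin d) ℝ) - (1 / lam) • (ridgeMat lam h)⁻¹) *ᵥ θstar))) ∧
    (1 / lam) * (θstar ⬝ᵥ
        (((1 : Matrix (Fin d) (Fin d) ℝ) - (1 / lam) • (ridgeMat lam h)⁻¹) *ᵥ θstar)) ≤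
      (∑ j, θstar j ^ 2) / lam := by
  have hc : 0 < 1 / lam := by positivity
  have hnn : ∀ x : Fin d → ℝ, 0 ≤ x ⬝ᵥ x := fun x =>
    Finset.sum_nonneg fun i _ => mul_self_nonneg _
  have hpos : ∀ x : Fin d → ℝ, 0 ≤ x ⬝ᵥ (ridgeMat lam h *ᵥ x) := by
    intro x
    rw [ridge_bilin]
    exact add_nonneg real_inner_self_nonneg (mul_nonneg hc.le (hnn x))
  have hinj : Function.Injective (ridgeMat lam h).mulVec := by
    intro a b hab
    have h0 : ridgeMat lam h *ᵥ (a - b) = 0 := by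
      rw [mulVec_sub]; exact sub_eq_zero.2 hab
    have h1 := ridge_bilin lam h (a - b) (a - b)
    rw [h0, dotProduct_zero] at h1
    have h2 : 0 ≤ inner ℝ (∑ j, (a - b) j • h j) (∑ j, (a - b) j • h j) :=
      real_inner_self_nonneg
    have h3 : (a - b) ⬝ᵥ (a - b) = 0 := by
      have := hnn (a - b)
      by_contra hne
      have := mul_pos hc (lt_of_le_of_ne this (Ne.symm hne))
      linarith
    exact sub_eq_zero.1 (dotProduct_self_eq_zero.1 h3)
  have hu : IsUnit (ridgeMat lam h) := mulVec_injective_iff_isUnit.1 hinj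
  obtain ⟨v, hv⟩ : ∃ v, v = (ridgeMat lam h)⁻¹ *ᵥ θstar := ⟨_, rfl⟩
  have hSv : ridgeMat lam h *ᵥ v = θstar := by
    rw [hv, mulVec_mulVec, Matrix.mul_nonsing_inv _ ((Matrix.isUnit_iff_isUnit_det _).1 hu),
      one_mulVec]
  have hsymm : ∀ x y : Fin d → ℝ, x ⬝ᵥ (ridgeMat lam h *ᵥ y) = y ⬝ᵥ (ridgeMat lam h *ᵥ x) := by
    intro x y
    rw [ridge_bilin, ridge_bilin, real_inner_comm, dotProduct_comm x y]
  have hJ : (1 / lam) * (θstar ⬝ᵥ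
        (((1 : Matrix (Fin d) (Fin d) ℝ) - (1 / lam) • (ridgeMat lam h)⁻¹) *ᵥ θstar)) =
      (1 / lam) * (θstar ⬝ᵥ θstar - (1 / lam) * (θstar ⬝ᵥ v)) := by
    rw [sub_mulVec, one_mulVec, smul_mulVec, ← hv, dotProduct_sub, dotProduct_smul, smul_eq_mul]
  rw [hJ]
  have hL : ∀ e : Fin d → ℝ, ridgeLoss lam g h (θstar - e) =
      (e - (1 / lam) • v) ⬝ᵥ (ridgeMat lam h *ᵥ (e - (1 / lam) • v)) +
      (1 / lam) * (θstar ⬝ᵥ θstar - (1 / lam) * (θstar ⬝ᵥ v)) := by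
    intro e
    have e1 : g - ∑ j, (θstar - e) j • h j = ∑ j, e j • h j := by
      simp [hg, sub_smul, Finset.sum_sub_distrib]
    have e2 : ∑ j, (θstar - e) j ^ 2 = (θstar - e) ⬝ᵥ (θstar - e) := by
      simp only [dotProduct, sq]
    have e3 := ridge_bilin lam h e e
    rw [real_inner_self_eq_norm_sq] at e3
    have e4 : v ⬝ᵥ (ridgeMat lam h *ᵥ e) = e ⬝ᵥ θstar := by rw [hsymm, hSv]
    rw [ridgeLoss, e1, e2]
    simp only [mulVec_sub, mulVec_smul, hSv, dotProduct_sub, sub_dotProduct, smul_dotProduct,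
      dotProduct_smul, smul_eq_mul, e4]
    rw [e3, dotProduct_comm v θstar, dotProduct_comm θstar e]
    ring
  have hlb : ∀ θ : Fin d → ℝ, (1 / lam) * (θstar ⬝ᵥ θstar - (1 / lam) * (θstar ⬝ᵥ v)) ≤
      ridgeLoss lam g h θ := by
    intro θ
    have := hL (θstar - θ)
    rw [sub_sub_cancel] at this
    rw [this]
    exact le_add_of_nonneg_left (hpos _)
  refine ⟨⟨⟨θstar - (1 / lam) • v, ?_⟩, ?_⟩, ?_⟩
  · rw [hL]; simp
  · rintro _ ⟨θ, rfl⟩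
    exact hlb θ
  · refine (hlb θstar).trans (le_of_eq ?_)
    rw [ridgeLoss, hg, sub_self]
    simp [div_eq_inv_mul]
end

section
/- Let H be a real inner product space, d a positive integer, λ > 0, g ∈ H and h = (h₁,…,h_d) ∈ H^d. Define Σ ∈ ℝ^{d×d} by Σ_{jk} = ⟨h_j, h_k⟩ + (1/λ)·1{j=k} and Φ ∈ ℝ^d by Φ_j = ⟨g, h_j⟩, and set θ̂ = Σ^{−1}Φ. Then ‖θ̂‖₂² ≤ λ Φᵀ Σ^{−1} Φ and Φᵀ Σ^{−1} Φ ≤ ‖g‖². -/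
open Matrix

/-- `Φ_j = ⟨g, h_j⟩`. -/
noncomputable def ridgeVec {H : Type*} [NormedAddCommGroup H] [InnerProductSpace ℝ H]
    {d : ℕ} (g : H) (h : Fin d → H) : Fin d → ℝ :=
  fun j => (inner ℝ g (h j) : ℝ)

theorem ridge_quad {H : Type*} [NormedAddCommGroup H] [InnerProductSpace ℝ H]
    {d : ℕ} (lam : ℝ) (h : Fin d → H) (x : Fin d → ℝ) :
    x ⬝ᵥ (ridgeMat lam h *ᵥ x) = ‖∑ j, x j • h j‖ ^ 2 + (1 / lam) * ∑ j, x j ^ 2 := by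
  rw [← real_inner_self_eq_norm_sq, sum_inner, Finset.mul_sum, ← Finset.sum_add_distrib]
  simp only [dotProduct, mulVec, ridgeMat, Matrix.of_apply]
  refine Finset.sum_congr rfl fun j _ => ?_
  simp only [add_mul, Finset.sum_add_distrib, ite_mul, zero_mul, Finset.sum_ite_eq,
    Finset.mem_univ, if_true, inner_sum, real_inner_smul_left, real_inner_smul_right, mul_add,
    Finset.mul_sum]
  congr 1
  · refine Finset.sum_congr rfl fun k _ => ?_
    ring
  · ring

theorem ridge_unit {H : Type*} [NormedAddCommGroup H] [InnerProductSpace ℝ H]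
    {d : ℕ} (lam : ℝ) (hlam : 0 < lam) (h : Fin d → H) : IsUnit (ridgeMat lam h).det := by
  rw [isUnit_iff_ne_zero]
  intro h0
  obtain ⟨x, hx, hx0⟩ := Matrix.exists_mulVec_eq_zero_iff.mpr h0
  have hq := ridge_quad lam h x
  rw [hx0, dotProduct_zero] at hq
  have hS : 0 ≤ ∑ j, x j ^ 2 := Finset.sum_nonneg fun j _ => sq_nonneg _
  have hl : 0 < 1 / lam := by positivity
  have hS0 : ∑ j, x j ^ 2 = 0 := by
    nlinarith [sq_nonneg ‖∑ j, x j • h j‖, mul_nonneg hl.le hS]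
  apply hx
  funext j
  have := (Finset.sum_eq_zero_iff_of_nonneg (fun j _ => sq_nonneg (x j))).mp hS0 j
    (Finset.mem_univ j)
  simpa using this

/-- With `θ̂ = Σ⁻¹Φ`, one has `‖θ̂‖₂² ≤ λ Φᵀ Σ⁻¹ Φ` and `Φᵀ Σ⁻¹ Φ ≤ ‖g‖²`. -/
theorem stmt_15 {H : Type*} [NormedAddCommGroup H] [InnerProductSpace ℝ H]
    {d : ℕ} (hd : 0 < d) (lam : ℝ) (hlam : 0 < lam) (g : H) (h : Fin d → H) :
    (∑ j, (((ridgeMat lam h)⁻¹ *ᵥ ridgeVec g h) j) ^ 2) ≤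
        lam * (ridgeVec g h ⬝ᵥ ((ridgeMat lam h)⁻¹ *ᵥ ridgeVec g h)) ∧
      ridgeVec g h ⬝ᵥ ((ridgeMat lam h)⁻¹ *ᵥ ridgeVec g h) ≤ ‖g‖ ^ 2 := by
  set θ := (ridgeMat lam h)⁻¹ *ᵥ ridgeVec g h with hθ
  have hSig : ridgeMat lam h *ᵥ θ = ridgeVec g h := by
    rw [hθ, Matrix.mulVec_mulVec, Matrix.mul_nonsing_inv _ (ridge_unit lam hlam h),
      Matrix.one_mulVec]
  have hq := ridge_quad lam h θ
  rw [hSig, dotProduct_comm] at hq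
  have hv : ridgeVec g h ⬝ᵥ θ = inner ℝ g (∑ j, θ j • h j) := by
    rw [inner_sum]
    simp only [dotProduct, ridgeVec, real_inner_smul_right]
    exact Finset.sum_congr rfl fun j _ => mul_comm _ _
  have hS : 0 ≤ ∑ j, θ j ^ 2 := Finset.sum_nonneg fun j _ => sq_nonneg _
  constructor
  · rw [hq, mul_add, ← mul_assoc, mul_one_div_cancel hlam.ne', one_mul]
    have : 0 ≤ lam * ‖∑ j, θ j • h j‖ ^ 2 := by positivity
    linarith
  · have h1 := real_inner_le_norm g (∑ j, θ j • h j)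
    have h2 : 0 ≤ (1 / lam) * ∑ j, θ j ^ 2 := by positivity
    nlinarith [sq_nonneg (‖g‖ - ‖∑ j, θ j • h j‖)]
end

section
/- Let H be a real inner product space, d a positive integer, and f = (f₁,…,f_d), g = (g₁,…,g_d) ∈ H^d. Let A, B ∈ ℝ^{d×d} be the Gram matrices A_{jk} = ⟨f_j, f_k⟩ and B_{jk} = ⟨g_j, g_k⟩, and write |f| := (Σ_{j=1}^d ‖f_j‖²)^{1/2}. Then the operator norm satisfies ‖A − B‖_op ≤ √2 (|f| + |g|) · |f − g|, where |f − g| = (Σ_{j=1}^d ‖f_j − g_j‖²)^{1/2}. -/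
open Matrix

theorem comb_bound {H : Type*} [NormedAddCommGroup H] [InnerProductSpace ℝ H]
    {d : ℕ} (x : Fin d → ℝ) (v : Fin d → H) :
    ‖∑ k, x k • v k‖ ^ 2 ≤ (∑ k, ‖v k‖ ^ 2) * ∑ k, x k ^ 2 := by
  have h1 : ‖∑ k, x k • v k‖ ≤ ∑ k, ‖v k‖ * |x k| := by
    refine (norm_sum_le _ _).trans (le_of_eq ?_)
    refine Finset.sum_congr rfl fun k _ => ?_
    rw [norm_smul, Real.norm_eq_abs, mul_comm]
  have h2 := Finset.sum_mul_sq_le_sq_mul_sq Finset.univ (fun k => ‖v k‖) (fun k => |x k|)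
  simp only [sq_abs] at h2
  exact (pow_le_pow_left₀ (norm_nonneg _) h1 2).trans h2

/-- Gram matrix perturbation bound: with `A_{jk} = ⟨f_j, f_k⟩`, `B_{jk} = ⟨g_j, g_k⟩`,
`‖A − B‖_op ≤ √2 (|f| + |g|) |f − g|` where `|f| = (Σ_j ‖f_j‖²)^{1/2}`. -/
theorem stmt_16 {H : Type*} [NormedAddCommGroup H] [InnerProductSpace ℝ H]
    {d : ℕ} (hd : 0 < d) (f g : Fin d → H) :
    ‖Matrix.toEuclideanCLM (𝕜 := ℝ)
        ((Matrix.of fun j k => (inner ℝ (f j) (f k) : ℝ)) -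
          Matrix.of fun j k => (inner ℝ (g j) (g k) : ℝ))‖ ≤
      Real.sqrt 2 * (Real.sqrt (∑ j, ‖f j‖ ^ 2) + Real.sqrt (∑ j, ‖g j‖ ^ 2)) *
        Real.sqrt (∑ j, ‖f j - g j‖ ^ 2) := by
  have hF0 : 0 ≤ ∑ j, ‖f j‖ ^ 2 := by positivity
  have hG0 : 0 ≤ ∑ j, ‖g j‖ ^ 2 := by positivity
  have hD0 : 0 ≤ ∑ j, ‖f j - g j‖ ^ 2 := by positivity
  refine ContinuousLinearMap.opNorm_le_bound _ (by positivity) fun x => ?_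
  refine (pow_le_pow_iff_left₀ (norm_nonneg _) (by positivity) two_ne_zero).1 ?_
  set a := Real.sqrt (∑ j, ‖f j‖ ^ 2) with ha
  set b := Real.sqrt (∑ j, ‖g j‖ ^ 2) with hb
  set c := Real.sqrt (∑ j, ‖f j - g j‖ ^ 2) with hc
  have ha2 : a ^ 2 = ∑ j, ‖f j‖ ^ 2 := Real.sq_sqrt hF0
  have hb2 : b ^ 2 = ∑ j, ‖g j‖ ^ 2 := Real.sq_sqrt hG0
  have hc2 : c ^ 2 = ∑ j, ‖f j - g j‖ ^ 2 := Real.sq_sqrt hD0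
  have ha0 : 0 ≤ a := Real.sqrt_nonneg _
  have hb0 : 0 ≤ b := Real.sqrt_nonneg _
  have hx : ‖x‖ ^ 2 = ∑ k, x k ^ 2 := EuclideanSpace.real_norm_sq_eq x
  set F : H := ∑ k, x k • f k with hF
  set G : H := ∑ k, x k • g k with hG
  have hFG : ‖F - G‖ ^ 2 ≤ c ^ 2 * ‖x‖ ^ 2 := by
    have : F - G = ∑ k, x k • (f k - g k) := by
      simp only [hF, hG, smul_sub, Finset.sum_sub_distrib]
    rw [this, hc2, hx]
    exact comb_bound _ _
  have hGn : ‖G‖ ^ 2 ≤ b ^ 2 * ‖x‖ ^ 2 := by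
    rw [hb2, hx]
    exact comb_bound _ _
  have key : ∀ j, (Matrix.toEuclideanCLM (𝕜 := ℝ)
        ((Matrix.of fun j k => (inner ℝ (f j) (f k) : ℝ)) -
          Matrix.of fun j k => (inner ℝ (g j) (g k) : ℝ)) x) j
      = inner ℝ (f j) (F - G) + inner ℝ (f j - g j) G := by
    intro j
    have e : inner ℝ (f j) (F - G) + inner ℝ (f j - g j) G
        = inner ℝ (f j) F - inner ℝ (g j) G := by
      rw [inner_sub_right, inner_sub_left]; ring
    rw [e, hF, hG, inner_sum, inner_sum, ← Finset.sum_sub_distrib]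
    simp only [Matrix.ofLp_toEuclideanCLM, Matrix.mulVec, dotProduct, Matrix.sub_apply,
      Matrix.of_apply, inner_smul_right]
    refine Finset.sum_congr rfl fun k _ => ?_
    ring
  rw [EuclideanSpace.real_norm_sq_eq]
  have hj : ∀ j, (inner ℝ (f j) (F - G) + inner ℝ (f j - g j) G) ^ 2
      ≤ ‖f j‖ ^ 2 * (2 * ‖F - G‖ ^ 2) + ‖f j - g j‖ ^ 2 * (2 * ‖G‖ ^ 2) := by
    intro j
    have h1 := sq_le_sq' (neg_le_of_abs_le (abs_real_inner_le_norm (f j) (F - G)))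
      (le_of_abs_le (abs_real_inner_le_norm (f j) (F - G)))
    have h2 := sq_le_sq' (neg_le_of_abs_le (abs_real_inner_le_norm (f j - g j) G))
      (le_of_abs_le (abs_real_inner_le_norm (f j - g j) G))
    have h3 := add_sq_le (a := inner ℝ (f j) (F - G)) (b := inner ℝ (f j - g j) G)
    rw [mul_pow] at h1 h2
    linarith
  calc _ ≤ ∑ j, (‖f j‖ ^ 2 * (2 * ‖F - G‖ ^ 2) + ‖f j - g j‖ ^ 2 * (2 * ‖G‖ ^ 2)) :=
        Finset.sum_le_sum fun j _ => by rw [key j]; exact hj j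
    _ = a ^ 2 * (2 * ‖F - G‖ ^ 2) + c ^ 2 * (2 * ‖G‖ ^ 2) := by
        rw [Finset.sum_add_distrib, ← Finset.sum_mul, ← Finset.sum_mul, ha2, hc2]
    _ ≤ a ^ 2 * (2 * (c ^ 2 * ‖x‖ ^ 2)) + c ^ 2 * (2 * (b ^ 2 * ‖x‖ ^ 2)) := by gcongr
    _ ≤ (√2 * (a + b) * c * ‖x‖) ^ 2 := by
        rw [mul_pow, mul_pow, mul_pow, Real.sq_sqrt (by norm_num : (0:ℝ) ≤ 2)]
        have : 0 ≤ a * b * (c ^ 2 * ‖x‖ ^ 2) := by positivity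
        nlinarith
end

section
/- Let d be a positive integer, c > 0, and let A, B ∈ ℝ^{d×d} be symmetric positive definite matrices whose smallest eigenvalues both satisfy λ_min(A) ≥ c and λ_min(B) ≥ c. Then |log det A − log det B| ≤ (√d / c) ‖A − B‖_F, where ‖·‖_F denotes the Frobenius norm. -/
open Matrix

theorem aux_one {d : ℕ} (c : ℝ) (hc : 0 < c)
    (A B : Matrix (Fin d) (Fin d) ℝ) (hA : A.IsHermitian) (hB : B.IsHermitian)
    (hAc : ∀ i, c ≤ hA.eigenvalues i) (hBc : ∀ i, c ≤ hB.eigenvalues i) :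
    Real.log A.det - Real.log B.det ≤
      (Real.sqrt d / c) * Real.sqrt (∑ j, ∑ k, ((A - B) j k) ^ 2) := by
  have hApos : A.PosDef := hA.posDef_iff_eigenvalues_pos.2 fun i => hc.trans_le (hAc i)
  have hBpos : B.PosDef := hB.posDef_iff_eigenvalues_pos.2 fun i => hc.trans_le (hBc i)
  obtain ⟨U, b, hU1, hU2, hb, hBU⟩ : ∃ (U : Matrix (Fin d) (Fin d) ℝ) (b : Fin d → ℝ),
      Uᴴ * U = 1 ∧ U * Uᴴ = 1 ∧ (∀ i, c ≤ b i) ∧ B = U * diagonal b * Uᴴ := by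
    refine ⟨hB.eigenvectorUnitary, hB.eigenvalues, ?_, ?_, hBc, ?_⟩
    · exact Unitary.coe_star_mul_self hB.eigenvectorUnitary
    · exact Unitary.coe_mul_star_self hB.eigenvectorUnitary
    · have := hB.spectral_theorem
      rw [Unitary.conjStarAlgAut_apply] at this
      exact this
  have hb0 : ∀ i, 0 < b i := fun i => hc.trans_le (hb i)
  set S : Matrix (Fin d) (Fin d) ℝ := U * diagonal (fun i => (Real.sqrt (b i))⁻¹) with hS
  set X : Matrix (Fin d) (Fin d) ℝ := U * diagonal (fun i => (b i)⁻¹) * Uᴴ with hX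
  have hSX : S * Sᴴ = X := by
    rw [hS, hX, conjTranspose_mul, diagonal_conjTranspose]
    simp only [Matrix.mul_assoc]
    rw [← Matrix.mul_assoc (diagonal _) (diagonal _), diagonal_mul_diagonal]
    congr 4
    funext i
    simp [← mul_inv, Real.mul_self_sqrt (hb0 i).le]
  have hconj : ∀ p q : Fin d → ℝ, (U * diagonal p * Uᴴ) * (U * diagonal q * Uᴴ)
      = U * diagonal (fun i => p i * q i) * Uᴴ := by
    intro p q
    rw [← diagonal_mul_diagonal]
    calc _ = U * diagonal p * (Uᴴ * U) * diagonal q * Uᴴ := by simp only [Matrix.mul_assoc]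
      _ = _ := by rw [hU1]; simp only [Matrix.mul_assoc, Matrix.one_mul]
  have hBX : B * X = 1 := by
    rw [hBU, hX, hconj]
    have : (fun i => b i * (b i)⁻¹) = fun _ => (1:ℝ) := by
      funext i; exact mul_inv_cancel₀ (hb0 i).ne'
    rw [this, diagonal_one, Matrix.mul_one, hU2]
  have hdX : B.det * X.det = 1 := by rw [← det_mul, hBX, det_one]
  have hdS : S.det * S.det = X.det := by
    rw [← hSX, det_mul S Sᴴ, det_conjTranspose S, star_trivial]
  have hXne : X.det ≠ 0 := right_ne_zero_of_mul (hdX ▸ one_ne_zero)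
  have hSne : S.det ≠ 0 := by
    intro h; rw [h] at hdS; simp at hdS; exact hXne hdS.symm
  have hSu : IsUnit S := (isUnit_iff_isUnit_det S).2 (isUnit_iff_ne_zero.2 hSne)
  have hC : (Sᴴ * A * S).PosDef := (hSu.posDef_star_left_conjugate_iff).2 hApos
  have hdet : (Sᴴ * A * S).det = A.det * X.det := by
    rw [det_mul, det_mul, det_conjTranspose, ← hdS]; simp; ring
  have htr : (Sᴴ * A * S).trace = (A * X).trace := by
    rw [Matrix.mul_assoc, trace_mul_comm, Matrix.mul_assoc, hSX]
  have hlog : Real.log (Sᴴ * A * S).det ≤ (Sᴴ * A * S).trace - d := by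
    rw [hC.1.det_eq_prod_eigenvalues, hC.1.trace_eq_sum_eigenvalues]
    simp only [RCLike.ofReal_real_eq_id, id]
    rw [Real.log_prod (fun i _ => (hC.eigenvalues_pos i).ne')]
    calc _ ≤ ∑ i, (hC.1.eigenvalues i - 1) :=
          Finset.sum_le_sum fun i _ => Real.log_le_sub_one_of_pos (hC.eigenvalues_pos i)
      _ = _ := by simp
  have hlog2 : Real.log (Sᴴ * A * S).det = Real.log A.det - Real.log B.det := by
    rw [hdet, Real.log_mul hApos.det_pos.ne' hXne]
    have := Real.log_mul hBpos.det_pos.ne' hXne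
    rw [hdX, Real.log_one] at this
    linarith
  have htr2 : (Sᴴ * A * S).trace - d = ((A - B) * X).trace := by
    rw [htr, Matrix.sub_mul, trace_sub, hBX]; simp
  have hXsymm : ∀ i j, X j i = X i j := by
    intro i j
    have : Xᴴ = X := by rw [← hSX, conjTranspose_mul, conjTranspose_conjTranspose]
    conv_lhs => rw [← this]
    simp
  have hXF : ∑ p : Fin d × Fin d, X p.1 p.2 ^ 2 ≤ d / c ^ 2 := by
    have h1 : ∑ p : Fin d × Fin d, X p.1 p.2 ^ 2 = (X * X).trace := by
      rw [Fintype.sum_prod_type]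
      simp only [trace, diag, mul_apply]
      exact Finset.sum_congr rfl fun i _ => Finset.sum_congr rfl fun j _ => by
        rw [hXsymm i j, sq]
    rw [h1, hX, hconj, trace_mul_comm, ← Matrix.mul_assoc, hU1, Matrix.one_mul, trace_diagonal]
    calc _ ≤ ∑ i : Fin d, 1 / c ^ 2 := Finset.sum_le_sum fun i _ => by
          rw [← mul_inv, one_div, ← sq]
          have := hb i
          gcongr
      _ = _ := by simp [div_eq_mul_inv]
  rw [← hlog2]
  refine hlog.trans ?_
  rw [htr2]
  have h2 : ((A - B) * X).trace = ∑ p : Fin d × Fin d, X p.1 p.2 * (A - B) p.1 p.2 := by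
    rw [Fintype.sum_prod_type]
    simp only [trace, diag, mul_apply]
    exact Finset.sum_congr rfl fun i _ => Finset.sum_congr rfl fun j _ => by
      rw [hXsymm i j, mul_comm]
  rw [h2, ← Fintype.sum_prod_type (f := fun p : Fin d × Fin d => ((A - B) p.1 p.2) ^ 2)]
  refine (Real.sum_mul_le_sqrt_mul_sqrt _ _ _).trans ?_
  refine mul_le_mul_of_nonneg_right ?_ (Real.sqrt_nonneg _)
  refine (Real.sqrt_le_sqrt hXF).trans_eq ?_
  rw [Real.sqrt_div (by positivity), Real.sqrt_sq hc.le]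

/-- If `A, B` are symmetric positive definite with all eigenvalues at least `c > 0`, then
`|log det A − log det B| ≤ (√d / c) ‖A − B‖_F`. -/
theorem stmt_17 {d : ℕ} (hd : 0 < d) (c : ℝ) (hc : 0 < c)
    (A B : Matrix (Fin d) (Fin d) ℝ) (hA : A.IsHermitian) (hB : B.IsHermitian)
    (hAc : ∀ i, c ≤ hA.eigenvalues i) (hBc : ∀ i, c ≤ hB.eigenvalues i) :
    |Real.log A.det - Real.log B.det| ≤
      (Real.sqrt d / c) * Real.sqrt (∑ j, ∑ k, ((A - B) j k) ^ 2) := by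
  refine abs_sub_le_iff.2 ⟨aux_one c hc A B hA hB hAc hBc, ?_⟩
  refine (aux_one c hc B A hB hA hBc hAc).trans_eq ?_
  congr 2
  refine Finset.sum_congr rfl fun i _ => Finset.sum_congr rfl fun j _ => ?_
  simp only [Matrix.sub_apply]
  ring
end
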